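/- Let d ≥ 3 and ε ∈ (0,1), fix 1 ≤ r_N ≤ N^{1−ε}, and let A = B(0,r_N) ⊂ T. There exist constants c, c′ > 0 depending only on d and ε such that for every nonempty V ⊆ A and all N ≥ 2: | N^d / ( E[H_V] · cap(𝖵) ) − 1 | ≤ c N^{−c′}, where 𝖵 = φ(V). -/

import Mathlib

open MeasureTheory Filter Classical
open scoped ENNReal NNReal

noncomputable section

namespace Frag

/-! ### Graph-theoretic basics -/

/-- Two vertices of `Fin d → R` are adjacent if they differ in exactly one
coordinate, by `±1` (Euclidean distance one). -/
def adj {d : ℕ} {R : Type*} [AddGroupWithOne R] (x y : Fin d → R) : Prop :=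
  x ≠ y ∧ ∃ i : Fin d, (y i = x i + 1 ∨ x i = y i + 1) ∧ ∀ j : Fin d, j ≠ i → x j = y j

/-- The discrete torus `(ℤ/Nℤ)^d`. -/
abbrev Torus (d N : ℕ) := Fin d → ZMod N

/-- The lattice `ℤ^d`. -/
abbrev Lat (d : ℕ) := Fin d → ℤ

instance (n : ℕ) : MeasurableSpace (ZMod n) := ⊤

/-- The `ℓ∞`-distance on the torus. -/
def torusDist {d N : ℕ} (x y : Torus d N) : ℕ :=
  Finset.univ.sup fun i : Fin d => min (x i - y i).val (y i - x i).val

/-- The `ℓ∞`-distance on the lattice. -/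
def latDist {d : ℕ} (x y : Lat d) : ℕ :=
  Finset.univ.sup fun i : Fin d => (x i - y i).natAbs

/-- Closed `ℓ∞`-ball in the torus. -/
def torusBall {d N : ℕ} (x : Torus d N) (r : ℝ) : Set (Torus d N) :=
  {y | (torusDist x y : ℝ) ≤ r}

/-- Closed `ℓ∞`-ball in the lattice. -/
def latBall {d : ℕ} (x : Lat d) (r : ℝ) : Set (Lat d) :=
  {y | (latDist x y : ℝ) ≤ r}

/-- `x` and `y` are connected by a nearest-neighbour path staying in `S`. -/
def connectedIn {α : Type*} (rel : α → α → Prop) (S : Set α) (x y : α) : Prop :=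
  ∃ (n : ℕ) (p : ℕ → α), p 0 = x ∧ p n = y ∧ (∀ k, k ≤ n → p k ∈ S) ∧
    ∀ k, k < n → rel (p k) (p (k + 1))

/-- The connected component of `x` inside `S`. -/
def compOf {α : Type*} (rel : α → α → Prop) (S : Set α) (x : α) : Set α :=
  {y | connectedIn rel S x y}

/-- `S` is a connected set. -/
def IsConnSet {α : Type*} (rel : α → α → Prop) (S : Set α) : Prop :=
  ∀ x ∈ S, ∀ y ∈ S, connectedIn rel S x y

/-- External vertex boundary. -/
def extBdry {α : Type*} (rel : α → α → Prop) (S : Set α) : Set α :=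
  {y | y ∉ S ∧ ∃ x ∈ S, rel x y}

/-- Internal vertex boundary. -/
def intBdry {α : Type*} (rel : α → α → Prop) (S : Set α) : Set α :=
  {x | x ∈ S ∧ ∃ y, y ∉ S ∧ rel x y}

/-- The cardinality of the largest connected component of `S`. -/
def maxCompSize {α : Type*} (rel : α → α → Prop) (S : Set α) : ℕ :=
  sSup {n | ∃ x ∈ S, n = (compOf rel S x).ncard}

/-- The diameter of a set with respect to a distance. -/
def diamOf {α : Type*} (dist : α → α → ℕ) (S : Set α) : ℕ :=
  sSup {n | ∃ x ∈ S, ∃ y ∈ S, n = dist x y}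

/-- The canonical graph isomorphism `φ` from `B(0, N/4) ⊆ (ℤ/Nℤ)^d` onto
`B(0, N/4) ⊆ ℤ^d`, given by the signed representative of each coordinate. -/
def torusToLat {d N : ℕ} (x : Torus d N) : Lat d :=
  fun i => if ((x i).val : ℝ) ≤ (N : ℝ) / 2 then ((x i).val : ℤ) else ((x i).val : ℤ) - (N : ℤ)

/-! ### Discrete-time simple random walk -/

/-- One-step transition probability of the simple random walk. -/
def srwStep {d : ℕ} {R : Type*} [AddGroupWithOne R] (x y : Fin d → R) : ℝ≥0∞ :=
  if adj x y then ((2 * d : ℕ) : ℝ≥0∞)⁻¹ else 0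

/-- `μ` is the law on path space of the discrete-time simple random walk with
initial distribution `init`, characterized by its cylinder probabilities. -/
def IsWalkLaw {d : ℕ} {R : Type*} [AddGroupWithOne R] [MeasurableSpace R]
    (μ : Measure (ℕ → (Fin d → R))) (init : (Fin d → R) → ℝ≥0∞) : Prop :=
  IsProbabilityMeasure μ ∧
  ∀ (n : ℕ) (w : ℕ → (Fin d → R)),
    μ {ω | ∀ k, k ≤ n → ω k = w k} =
      init (w 0) * ∏ k ∈ Finset.range n, srwStep (w k) (w (k + 1))

/-- The uniform initial distribution on the torus. -/
def unifInit (d N : ℕ) : Torus d N → ℝ≥0∞ := fun _ => ((N : ℝ≥0∞) ^ d)⁻¹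

/-- The initial distribution concentrated at `x`. -/
def pointInit {α : Type*} (x : α) : α → ℝ≥0∞ := fun y => if y = x then 1 else 0

/-- The set of sites visited in the first `t` steps. -/
def visited {α : Type*} (t : ℕ) (ω : ℕ → α) : Set α := {v | ∃ k, k ≤ t ∧ ω k = v}

/-! ### Capacity and random interlacements on `ℤ^d` -/

/-- The event that the walk never returns to `V` after time `0`. -/
def escEvent {d : ℕ} (V : Set (Lat d)) : Set (ℕ → Lat d) :=
  {w | ∀ n, 1 ≤ n → w n ∉ V}

/-- `r` is the (simple random walk) capacity of `V ⊆ ℤ^d`: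
`r = Σ_{x ∈ V} P_x[H̃_V = ∞]`. -/
def IsCap (d : ℕ) (V : Set (Lat d)) (r : ℝ) : Prop :=
  ∃ μ : Lat d → Measure (ℕ → Lat d),
    (∀ x, IsWalkLaw (μ x) (pointInit x)) ∧
    r = ∑ᶠ x ∈ V, ((μ x) (escEvent V)).toReal

/-- `I` is a random interlacement at level `u` on the probability space `(Ω, P)`:
for every finite `V ⊆ ℤ^d`, `P[I ∩ V = ∅] = exp (−u · cap V)`. -/
def IsInterlacement (d : ℕ) (u : ℝ) {Ω : Type*} [MeasurableSpace Ω]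
    (P : Measure Ω) (I : Ω → Set (Lat d)) : Prop :=
  IsProbabilityMeasure P ∧
  (∀ x : Lat d, MeasurableSet {ω | x ∈ I ω}) ∧
  ∀ V : Set (Lat d), V.Finite → ∀ r : ℝ, IsCap d V r →
    P {ω | ∀ x ∈ V, x ∉ I ω} = ENNReal.ofReal (Real.exp (-u * r))

/-- `e = η(u)`, the probability that the origin lies in an infinite component of
the vacant set `V^u = ℤ^d ∖ I^u` of a random interlacement at level `u`. -/
def IsEta (d : ℕ) (u e : ℝ) : Prop :=
  ∃ (Ω : Type) (_ : MeasurableSpace Ω) (P : Measure Ω) (I : Ω → Set (Lat d)),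
    IsInterlacement d u P I ∧
    e = (P {ω | (compOf adj ((I ω)ᶜ) (0 : Lat d)).Infinite}).toReal

/-- The critical level `u_* = inf {u ≥ 0 : η(u) = 0}`. -/
def uStar (d : ℕ) : ℝ := sInf {u | 0 ≤ u ∧ IsEta d u 0}

/-- The probability of an event `E` about a random interlacement at level `u`. -/
def intProb (d : ℕ) (u : ℝ) (E : Set (Lat d) → Prop) : ℝ :=
  sSup {p | ∃ (Ω : Type) (_ : MeasurableSpace Ω) (P : Measure Ω) (I : Ω → Set (Lat d)),
    IsInterlacement d u P I ∧ p = (P {ω | E (I ω)}).toReal}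

/-- The event that `B(0,L)` is connected to the external boundary of `B(0,2L)`
by a nearest-neighbour path in `S`. -/
def connAcross (d L : ℕ) (S : Set (Lat d)) : Prop :=
  ∃ x ∈ latBall (0 : Lat d) (L : ℝ), ∃ y ∈ extBdry adj (latBall (0 : Lat d) (2 * (L : ℝ))),
    connectedIn adj S x y

/-- The critical level `u_** = inf {u ≥ 0 : α(u) > 0}`. -/
def uStarStar (d : ℕ) : ℝ :=
  sInf {u | 0 ≤ u ∧ ∃ a : ℝ, 0 < a ∧
    Tendsto (fun L : ℕ => (L : ℝ) ^ a * intProb d u fun I => connAcross d L Iᶜ)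
      atTop (nhds 0)}

/-- `u` is a strongly supercritical level for random interlacements on `ℤ^d`. -/
def StronglySupercritical (d : ℕ) (u : ℝ) : Prop :=
  ∃ μ : ℝ, 0 < μ ∧
  ∃ (Ω : Type) (_ : MeasurableSpace Ω) (P : Measure Ω) (I : ℝ → Ω → Set (Lat d)),
    (∀ v : ℝ, 0 ≤ v → IsInterlacement d v P (I v)) ∧
    (∀ v v' : ℝ, v ≤ v' → ∀ ω, I v ω ⊆ I v' ω) ∧
    ∃ N₀ : ℕ, ∀ N : ℕ, N₀ ≤ N →
      (1 - Real.exp (-(N : ℝ) ^ μ) ≤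
        (P {ω | ∃ x ∈ latBall (0 : Lat d) (N : ℝ),
          (compOf adj ((I (u * (1 + μ)) ω)ᶜ) x).Infinite}).toReal) ∧
      (1 - Real.exp (-(N : ℝ) ^ μ) ≤
        (P {ω | ∀ S₁ S₂ : Set (Lat d),
            S₁ ⊆ (I (u * (1 - μ)) ω)ᶜ ∩ latBall 0 (N : ℝ) →
            S₂ ⊆ (I (u * (1 - μ)) ω)ᶜ ∩ latBall 0 (N : ℝ) →
            IsConnSet adj S₁ → IsConnSet adj S₂ →
            (N : ℝ) / 8 ≤ (diamOf latDist S₁ : ℝ) →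
            (N : ℝ) / 8 ≤ (diamOf latDist S₂ : ℝ) →
            ∃ x ∈ S₁, ∃ y ∈ S₂,
              connectedIn adj ((I (u * (1 + μ)) ω)ᶜ ∩ latBall 0 (2 * (N : ℝ))) x y}).toReal)

/-! ### Continuous-time walk -/

/-- Sample space for the continuous-time walk: a discrete path together with
the i.i.d. exponential interarrival gaps of the driving Poisson process. -/
abbrev CTPath (d N : ℕ) := (ℕ → Torus d N) × (ℕ → ℝ)

/-- The number of jumps performed up to time `t`. -/
def nJumps (g : ℕ → ℝ) (t : ℝ) : ℕ := sSup {n | ∑ k ∈ Finset.range n, g k ≤ t}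

/-- The position of the continuous-time walk at time `t`. -/
def ctPos {d N : ℕ} (ω : CTPath d N) (t : ℝ) : Torus d N := ω.1 (nJumps ω.2 t)

/-- `ν` is the law of an i.i.d. sequence of exponential random variables of
parameter `1`, characterized by its joint survival function. -/
def IsIIDExp (ν : Measure (ℕ → ℝ)) : Prop :=
  IsProbabilityMeasure ν ∧
  ∀ (n : ℕ) (s : ℕ → ℝ), (∀ k, 0 ≤ s k) →
    ν {g | ∀ k, k ≤ n → s k < g k} =
      ENNReal.ofReal (Real.exp (-(∑ k ∈ Finset.range (n + 1), s k)))

/-- `P` is the law of the continuous-time simple random walk `Y_t = X_{N_t}`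
with initial distribution `init`. -/
def IsCTWalk {d N : ℕ} (P : Measure (CTPath d N)) (init : Torus d N → ℝ≥0∞) : Prop :=
  ∃ (μ : Measure (ℕ → Torus d N)) (ν : Measure (ℕ → ℝ)),
    IsWalkLaw μ init ∧ IsIIDExp ν ∧ P = μ.prod ν

/-- The entrance time `H_V = inf {t ≥ 0 : Y_t ∈ V}`. -/
def hitT {d N : ℕ} (V : Set (Torus d N)) (ω : CTPath d N) : ℝ :=
  sInf {t | 0 ≤ t ∧ ctPos ω t ∈ V}

/-- The entrance time to `V` after time `s`. -/
def hitTAfter {d N : ℕ} (V : Set (Torus d N)) (ω : CTPath d N) (s : ℝ) : ℝ :=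
  sInf {t | s ≤ t ∧ ctPos ω t ∈ V}

/-- The exit time `T_V = inf {t ≥ 0 : Y_t ∉ V}`. -/
def exitT {d N : ℕ} (V : Set (Torus d N)) (ω : CTPath d N) : ℝ :=
  sInf {t | 0 ≤ t ∧ ctPos ω t ∉ V}

/-- The regeneration time `t_* = (N log N)^2`. -/
def tstar (N : ℕ) : ℝ := ((N : ℝ) * Real.log N) ^ 2

/-- The first time `t ≥ s + t_*` such that the walk has avoided `B` during the
whole interval `[t − t_*, t]`. -/
def uEndAfter {d N : ℕ} (B : Set (Torus d N)) (ω : CTPath d N) (s : ℝ) : ℝ :=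
  sInf {t | s + tstar N ≤ t ∧ ∀ r, t - tstar N ≤ r → r ≤ t → ctPos ω r ∉ B}

/-- The successive excursion times `(R_k, U_k)` between `A` and (long absences
from) `B`, with the convention `(R_0, U_0) = (0, 0)`. -/
def excTimes {d N : ℕ} (A B : Set (Torus d N)) (ω : CTPath d N) : ℕ → ℝ × ℝ
  | 0 => (0, 0)
  | k + 1 =>
      let R := hitTAfter A ω (excTimes A B ω k).2
      (R, uEndAfter B ω R)

/-- The range of the continuous-time walk during the time interval `[a, b]`. -/
def ctRange {d N : ℕ} (ω : CTPath d N) (a b : ℝ) : Set (Torus d N) :=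
  {v | ∃ t, a ≤ t ∧ t ≤ b ∧ ctPos ω t = v}

/-! ### The killed walk and the quasistationary distribution -/

/-- The action of the substochastic matrix `P^B` (walk killed on `B`) on a
vector `v`. -/
def killedMul (d N : ℕ) (B : Set (Torus d N)) (v : Torus d N → ℝ) (x : Torus d N) : ℝ :=
  ∑ᶠ y : Torus d N, if y ∉ B ∧ adj x y then v y / (2 * d) else 0

/-- `l` is an eigenvalue of the killed transition matrix `P^B`. -/
def IsKilledEigenvalue (d N : ℕ) (B : Set (Torus d N)) (l : ℝ) : Prop :=
  ∃ v : Torus d N → ℝ, v ≠ 0 ∧ (∀ x ∈ B, v x = 0) ∧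
    ∀ x, x ∉ B → killedMul d N B v x = l * v x

/-- `σ` is the quasistationary distribution on `T ∖ B`: the normalized
non-negative principal (Perron–Frobenius) eigenvector of `P^B`. -/
def IsQSD (d N : ℕ) (B : Set (Torus d N)) (σ : Torus d N → ℝ) : Prop :=
  (∀ x, 0 ≤ σ x) ∧ (∀ x ∈ B, σ x = 0) ∧ (∑ᶠ x, σ x = 1) ∧
  ∃ l : ℝ, (∀ x, x ∉ B → killedMul d N B σ x = l * σ x) ∧
    ∀ l', IsKilledEigenvalue d N B l' → l' ≤ l

/-- The Dirichlet form of the simple random walk on the torus. -/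
def dirichlet (d N : ℕ) (g : Torus d N → ℝ) : ℝ :=
  (1 / 2) * ∑ᶠ x : Torus d N, ∑ᶠ y : Torus d N,
    if adj x y then (g x - g y) ^ 2 / (2 * d * (N : ℝ) ^ d) else 0

end Frag

namespace Frag

section Averaging

variable {d : ℕ} {R S : Type*} [CommRing R] [CommRing S]

/-- The averaging operator of the simple random walk on `Fin d → R`. -/
def srwAvg (d : ℕ) (R : Type*) [CommRing R] : Module.End ℝ ((Fin d → R) → ℝ) where
  toFun f x := (2 * d : ℝ)⁻¹ * ∑ i, (f (x + Pi.single i 1) + f (x - Pi.single i 1))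
  map_add' f g := by
    ext x
    simp only [Pi.add_apply, ← mul_add, ← Finset.sum_add_distrib]
    congr 1
    exact Finset.sum_congr rfl fun i _ => by ring
  map_smul' c f := by
    ext x
    simp only [Pi.smul_apply, smul_eq_mul, RingHom.id_apply, Finset.mul_sum]
    exact Finset.sum_congr rfl fun i _ => by ring

/-- The averaging operator of the lazy simple random walk on `Fin d → R`. -/
def lazyAvg (d : ℕ) (R : Type*) [CommRing R] : Module.End ℝ ((Fin d → R) → ℝ) :=
  (1 / 2 : ℝ) • (1 + srwAvg d R)

theorem srwAvg_apply (f : (Fin d → R) → ℝ) (x : Fin d → R) :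
    srwAvg d R f x =
      (2 * d : ℝ)⁻¹ * ∑ i, (f (x + Pi.single i 1) + f (x - Pi.single i 1)) := rfl

theorem lazyAvg_apply (f : (Fin d → R) → ℝ) (x : Fin d → R) :
    lazyAvg d R f x = (f x + srwAvg d R f x) / 2 := by
  simp only [lazyAvg, LinearMap.smul_apply, LinearMap.add_apply, Module.End.one_apply,
    Pi.smul_apply, Pi.add_apply, smul_eq_mul]
  ring

theorem srwAvg_mono {f g : (Fin d → R) → ℝ} (h : ∀ x, f x ≤ g x) (x : Fin d → R) :
    srwAvg d R f x ≤ srwAvg d R g x := by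
  simp only [srwAvg_apply]
  gcongr <;> apply h

theorem srwAvg_const (hd : d ≠ 0) (c : ℝ) (x : Fin d → R) :
    srwAvg d R (fun _ => c) x = c := by
  have : (d : ℝ) ≠ 0 := by exact_mod_cast hd
  simp only [srwAvg_apply, Finset.sum_const, Finset.card_univ, Fintype.card_fin, nsmul_eq_mul]
  field_simp
  ring

theorem srwAvg_nonneg {f : (Fin d → R) → ℝ} (h : ∀ x, 0 ≤ f x) (x : Fin d → R) :
    0 ≤ srwAvg d R f x := by
  have := srwAvg_mono (f := fun _ => 0) h x
  simpa [srwAvg_apply] using this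

theorem lazyAvg_pow_succ_apply (t : ℕ) (f : (Fin d → R) → ℝ) (x : Fin d → R) :
    (lazyAvg d R ^ (t + 1)) f x =
      ((lazyAvg d R ^ t) f x + srwAvg d R ((lazyAvg d R ^ t) f) x) / 2 := by
  rw [pow_succ', Module.End.mul_apply, lazyAvg_apply]

theorem lazyAvg_pow_mono (t : ℕ) {f g : (Fin d → R) → ℝ} (h : ∀ x, f x ≤ g x)
    (x : Fin d → R) : (lazyAvg d R ^ t) f x ≤ (lazyAvg d R ^ t) g x := by
  induction t generalizing x with
  | zero => simpa using h x
  | succ t ih =>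
    rw [lazyAvg_pow_succ_apply, lazyAvg_pow_succ_apply]
    linarith [ih x, srwAvg_mono ih x]

theorem lazyAvg_pow_const (hd : d ≠ 0) (t : ℕ) (c : ℝ) (x : Fin d → R) :
    (lazyAvg d R ^ t) (fun _ => c) x = c := by
  induction t generalizing x with
  | zero => simp
  | succ t ih =>
    rw [lazyAvg_pow_succ_apply, ih, funext ih, srwAvg_const hd]
    ring

theorem lazyAvg_pow_nonneg (t : ℕ) {f : (Fin d → R) → ℝ} (h : ∀ x, 0 ≤ f x)
    (x : Fin d → R) : 0 ≤ (lazyAvg d R ^ t) f x := by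
  have := lazyAvg_pow_mono t (f := 0) h x
  simpa using this

theorem lazyAvg_pow_comp {T : (Fin d → R) → (Fin d → S)}
    (hT : ∀ f : (Fin d → S) → ℝ, ∀ x, srwAvg d R (f ∘ T) x = srwAvg d S f (T x))
    (t : ℕ) (f : (Fin d → S) → ℝ) (x : Fin d → R) :
    (lazyAvg d R ^ t) (f ∘ T) x = (lazyAvg d S ^ t) f (T x) := by
  induction t generalizing x with
  | zero => simp
  | succ t ih =>
    have h : (lazyAvg d R ^ t) (f ∘ T) = (lazyAvg d S ^ t) f ∘ T := funext ih
    rw [lazyAvg_pow_succ_apply, lazyAvg_pow_succ_apply, h, ← hT, Function.comp_apply]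

theorem lazyAvg_pow_eigen {f : (Fin d → R) → ℝ} {l : ℝ}
    (h : ∀ x, srwAvg d R f x = l * f x) (t : ℕ) (x : Fin d → R) :
    (lazyAvg d R ^ t) f x = ((1 + l) / 2) ^ t * f x := by
  induction t generalizing x with
  | zero => simp
  | succ t ih =>
    have : (lazyAvg d R ^ t) f = ((1 + l) / 2) ^ t • f := funext ih
    rw [lazyAvg_pow_succ_apply, ih, this, map_smul, Pi.smul_apply, h, smul_eq_mul]
    ring

/-- The Green operator up to time `t` inverts the Laplacian up to a remainder. -/
theorem sum_lazyAvg_pow_sub (t : ℕ) (f : (Fin d → R) → ℝ) (x : Fin d → R) :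
    ∑ s ∈ Finset.range t, (lazyAvg d R ^ s) (f - srwAvg d R f) x =
      2 * (f x - (lazyAvg d R ^ t) f x) := by
  induction t with
  | zero => simp
  | succ t ih =>
    have hc : (lazyAvg d R ^ (t + 1)) f x =
        ((lazyAvg d R ^ t) f x + (lazyAvg d R ^ t) (srwAvg d R f) x) / 2 := by
      have : lazyAvg d R f = (1 / 2 : ℝ) • (f + srwAvg d R f) := by
        ext y; rw [lazyAvg_apply]; simp; ring
      rw [pow_succ, Module.End.mul_apply, this, map_smul, map_add]
      simp; ring
    rw [Finset.sum_range_succ, ih, hc, map_sub, Pi.sub_apply]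
    ring

/-- The indicator function of a point. -/
def delta {α : Type*} (y : α) : α → ℝ := fun x => if x = y then 1 else 0

/-- The transition kernel of the lazy simple random walk. -/
def lazyKer (t : ℕ) (x y : Fin d → R) : ℝ := (lazyAvg d R ^ t) (delta y) x

theorem delta_nonneg {α : Type*} (y x : α) : 0 ≤ delta y x := by
  unfold delta; split_ifs <;> norm_num

theorem delta_le_one {α : Type*} (y x : α) : delta y x ≤ 1 := by
  unfold delta; split_ifs <;> norm_num

theorem lazyKer_nonneg (t : ℕ) (x y : Fin d → R) : 0 ≤ lazyKer t x y :=
  lazyAvg_pow_nonneg t (delta_nonneg y) x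

theorem lazyKer_le_one (hd : d ≠ 0) (t : ℕ) (x y : Fin d → R) : lazyKer t x y ≤ 1 :=
  (lazyAvg_pow_mono t (delta_le_one y) x).trans_eq (lazyAvg_pow_const hd t 1 x)

theorem srwAvg_comp_sub (a : Fin d → R) (f : (Fin d → R) → ℝ) (x : Fin d → R) :
    srwAvg d R (f ∘ fun z => z - a) x = srwAvg d R f (x - a) := by
  simp only [srwAvg_apply, Function.comp]
  congr 1
  refine Finset.sum_congr rfl fun i _ => ?_
  rw [add_sub_right_comm, sub_right_comm]

theorem srwAvg_comp_neg (f : (Fin d → R) → ℝ) (x : Fin d → R) :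
    srwAvg d R (f ∘ fun z => -z) x = srwAvg d R f (-x) := by
  simp only [srwAvg_apply, Function.comp]
  congr 1
  refine Finset.sum_congr rfl fun i _ => ?_
  rw [add_comm, neg_add, neg_sub, ← sub_eq_add_neg, sub_eq_neg_add]

theorem srwAvg_comp_ringHom (φ : R →+* S) (f : (Fin d → S) → ℝ) (x : Fin d → R) :
    srwAvg d R (f ∘ fun z => φ ∘ z) x = srwAvg d S f (φ ∘ x) := by
  simp only [srwAvg_apply, Function.comp_def]
  congr 1
  refine Finset.sum_congr rfl fun i _ => ?_
  congr 2 <;> ext j <;> by_cases hj : j = i <;> simp [hj]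

theorem lazyKer_sub (t : ℕ) (x y : Fin d → R) : lazyKer t x y = lazyKer t (x - y) 0 := by
  have h : delta y = delta 0 ∘ fun z : Fin d → R => z - y := by
    ext z
    simp [delta, sub_eq_zero]
  rw [lazyKer, lazyKer, h, lazyAvg_pow_comp (srwAvg_comp_sub y) t (delta 0) x]

theorem lazyKer_comm (t : ℕ) (x y : Fin d → R) : lazyKer t x y = lazyKer t y x := by
  rw [lazyKer_sub t x y, lazyKer_sub t y x, ← neg_sub y x]
  have h : delta 0 = delta 0 ∘ fun z : Fin d → R => -z := by
    ext z
    simp [delta]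
  rw [lazyKer, lazyKer, ← lazyAvg_pow_comp srwAvg_comp_neg t (delta 0) (y - x), ← h]

theorem lazyAvg_pow_eq_sum (t : ℕ) {f : (Fin d → R) → ℝ} (s : Finset (Fin d → R))
    (hf : ∀ y, y ∉ s → f y = 0) (x : Fin d → R) :
    (lazyAvg d R ^ t) f x = ∑ y ∈ s, f y * lazyKer t x y := by
  have : f = ∑ y ∈ s, f y • delta y := by
    ext z
    simp only [Finset.sum_apply, Pi.smul_apply, delta, smul_eq_mul, mul_ite, mul_one, mul_zero,
      Finset.sum_ite_eq]
    split_ifs with h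
    · rfl
    · exact hf z h
  conv_lhs => rw [this]
  simp [map_sum, map_smul, Finset.sum_apply, lazyKer]

end Averaging

section TorusFourier

variable {d N : ℕ}

/-- The eigenvalue of the lazy walk on the torus attached to a frequency. -/
def torusEigenvalue (ξ : Fin d → ZMod N) : ℝ :=
  (1 + (d : ℝ)⁻¹ * ∑ i, Real.cos (2 * Real.pi * (ξ i).valMinAbs / N)) / 2

theorem torusEigenvalue_nonneg (hd : d ≠ 0) (ξ : Fin d → ZMod N) : 0 ≤ torusEigenvalue ξ := by
  have hd' : (0 : ℝ) < d := by exact_mod_cast Nat.pos_of_ne_zero hd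
  have h : -(d : ℝ) ≤ ∑ i, Real.cos (2 * Real.pi * (ξ i).valMinAbs / N) := by
    have := Finset.sum_le_sum fun i (_ : i ∈ Finset.univ) =>
      Real.neg_one_le_cos (2 * Real.pi * (ξ i).valMinAbs / N)
    simpa using this
  have : -1 ≤ (d : ℝ)⁻¹ * ∑ i, Real.cos (2 * Real.pi * (ξ i).valMinAbs / N) := by
    rw [inv_mul_eq_div, le_div_iff₀ hd']
    linarith
  unfold torusEigenvalue
  linarith

variable [NeZero N]

/-- The characters of the discrete torus. -/
def torusChar (ξ x : Fin d → ZMod N) : ℂ := ZMod.stdAddChar (ξ ⬝ᵥ x)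

theorem torusChar_norm (ξ x : Fin d → ZMod N) : ‖torusChar ξ x‖ = 1 :=
  AddChar.norm_apply _ _

theorem stdAddChar_add_neg (j : ZMod N) :
    (ZMod.stdAddChar j + ZMod.stdAddChar (-j) : ℂ) =
      2 * Real.cos (2 * Real.pi * j.valMinAbs / N) := by
  have h : ((j.valMinAbs : ℤ) : ZMod N) = j := ZMod.coe_valMinAbs j
  have h' : ((-j.valMinAbs : ℤ) : ZMod N) = -j := by simp
  rw [← h', ← h, ZMod.stdAddChar_coe, ZMod.stdAddChar_coe]
  simp only [ZMod.coe_valMinAbs]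
  push_cast
  rw [Complex.two_cos]
  congr 2 <;> ring

theorem torusChar_add_sub (ξ x : Fin d → ZMod N) (i : Fin d) :
    torusChar ξ (x + Pi.single i 1) + torusChar ξ (x - Pi.single i 1) =
      2 * Real.cos (2 * Real.pi * (ξ i).valMinAbs / N) * torusChar ξ x := by
  rw [← stdAddChar_add_neg, torusChar, torusChar, torusChar, dotProduct_add, dotProduct_sub,
    dotProduct_single, mul_one, sub_eq_add_neg, AddChar.map_add_eq_mul, AddChar.map_add_eq_mul]
  ring

theorem sum_torusChar (x : Fin d → ZMod N) :
    ∑ ξ, torusChar ξ x = if x = 0 then (N : ℂ) ^ d else 0 := by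
  have h : ∀ ξ, torusChar ξ x = ∏ i, (ZMod.stdAddChar (ξ i * x i) : ℂ) := fun ξ => by
    rw [torusChar, dotProduct]
    exact map_sum (ZMod.stdAddChar (N := N)).toAddMonoidHom (fun i => ξ i * x i) Finset.univ
  have h2 : ∑ ξ : Fin d → ZMod N, torusChar ξ x =
      ∏ i, ∑ j : ZMod N, (ZMod.stdAddChar (j * x i) : ℂ) := by
    rw [Finset.prod_univ_sum, Fintype.piFinset_univ]
    exact Finset.sum_congr rfl fun ξ _ => h ξ
  rw [h2]
  simp only [AddChar.sum_mulShift _ (ZMod.isPrimitive_stdAddChar N), ZMod.card]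
  split_ifs with hx
  · simp [hx]
  · obtain ⟨i, hi⟩ := Function.ne_iff.mp hx
    refine Finset.prod_eq_zero (Finset.mem_univ i) ?_
    rw [if_neg (by simpa using hi), Nat.cast_zero]

theorem lazyKer_torus_eq (hd : d ≠ 0) (t : ℕ) (x : Fin d → ZMod N) :
    (lazyKer t x 0 : ℂ) =
      ((N : ℂ) ^ d)⁻¹ * ∑ ξ, (torusEigenvalue ξ : ℂ) ^ t * torusChar ξ x := by
  have hN : (N : ℂ) ≠ 0 := by exact_mod_cast NeZero.ne N
  have hd' : (d : ℂ) ≠ 0 := by exact_mod_cast hd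
  induction t generalizing x with
  | zero =>
    simp only [pow_zero, one_mul, sum_torusChar, lazyKer, delta, Module.End.one_apply]
    split_ifs <;> simp [hN]
  | succ t ih =>
    have h1 : (lazyKer (t + 1) x 0 : ℂ) = ((lazyKer t x 0 : ℂ) + (2 * d : ℂ)⁻¹ *
        ∑ i, ((lazyKer t (x + Pi.single i 1) 0 : ℂ) + lazyKer t (x - Pi.single i 1) 0)) / 2 := by
      unfold lazyKer
      rw [lazyAvg_pow_succ_apply, srwAvg_apply]
      push_cast
      rfl
    rw [h1]
    simp only [ih]
    simp only [← mul_add, ← Finset.sum_add_distrib, torusChar_add_sub]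
    rw [← Finset.mul_sum, Finset.sum_comm, mul_left_comm (2 * d : ℂ)⁻¹, ← mul_add, mul_div_assoc]
    congr 1
    rw [Finset.mul_sum, ← Finset.sum_add_distrib, Finset.sum_div]
    refine Finset.sum_congr rfl fun ξ _ => ?_
    rw [← Finset.mul_sum, ← Finset.sum_mul, ← Finset.mul_sum, pow_succ]
    have : (torusEigenvalue ξ : ℂ) = (1 + (d : ℂ)⁻¹ *
        ∑ i, ((Real.cos (2 * Real.pi * (ξ i).valMinAbs / N) : ℝ) : ℂ)) / 2 := by
      unfold torusEigenvalue
      push_cast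
      rfl
    rw [this]
    field_simp

theorem cos_valMinAbs_le (j : ZMod N) :
    Real.cos (2 * Real.pi * j.valMinAbs / N) ≤ 1 - 8 / (N : ℝ) ^ 2 * (j.valMinAbs : ℝ) ^ 2 := by
  have hN : (0 : ℝ) < N := by exact_mod_cast NeZero.pos N
  have hj : |(j.valMinAbs : ℝ)| * 2 ≤ N := by
    have := ZMod.valMinAbs_mem_Ioc j
    obtain ⟨h1, h2⟩ := this
    have : |j.valMinAbs| * 2 ≤ N := by
      rcases abs_cases j.valMinAbs with h | h <;> omega
    exact_mod_cast this
  refine (Real.cos_le_one_sub_mul_cos_sq ?_).trans_eq ?_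
  · rw [abs_div, abs_mul, abs_of_pos hN, div_le_iff₀ hN,
      abs_of_pos (by positivity : (0 : ℝ) < 2 * Real.pi)]
    nlinarith [Real.pi_pos]
  · have := Real.pi_pos.ne'
    field_simp
    ring

theorem torusEigenvalue_le (hd : d ≠ 0) (ξ : Fin d → ZMod N) :
    torusEigenvalue ξ ≤
      Real.exp (-(4 / (d * (N : ℝ) ^ 2)) * ∑ i, ((ξ i).valMinAbs : ℝ) ^ 2) := by
  have hd' : (0 : ℝ) < d := by exact_mod_cast Nat.pos_of_ne_zero hd
  have hN : (0 : ℝ) < N := by exact_mod_cast NeZero.pos N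
  refine le_trans ?_ (Real.add_one_le_exp _)
  have h := Finset.sum_le_sum fun i (_ : i ∈ Finset.univ) => cos_valMinAbs_le (ξ i)
  rw [Finset.sum_sub_distrib, ← Finset.mul_sum] at h
  simp only [Finset.sum_const, Finset.card_univ, Fintype.card_fin, nsmul_eq_mul, mul_one] at h
  unfold torusEigenvalue
  have h2 := mul_le_mul_of_nonneg_left h (inv_nonneg.2 hd'.le)
  have h3 : (d : ℝ)⁻¹ * (d - 8 / (N : ℝ) ^ 2 * ∑ i, ((ξ i).valMinAbs : ℝ) ^ 2) =
      1 - 2 * ((4 / (d * (N : ℝ) ^ 2)) * ∑ i, ((ξ i).valMinAbs : ℝ) ^ 2) := by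
    field_simp
    ring
  rw [h3] at h2
  linarith

theorem torusEigenvalue_pow_le (hd : d ≠ 0) (t : ℕ) (ξ : Fin d → ZMod N) :
    torusEigenvalue ξ ^ t ≤
      ∏ i, Real.exp (-(4 * t / (d * (N : ℝ) ^ 2)) * ((ξ i).valMinAbs : ℝ) ^ 2) := by
  refine (pow_le_pow_left₀ (torusEigenvalue_nonneg hd ξ) (torusEigenvalue_le hd ξ) t).trans_eq ?_
  rw [← Real.exp_sum, ← Real.exp_nat_mul, ← Finset.mul_sum]
  congr 1
  ring

/-- Exponential relaxation of the lazy walk on the torus to the uniform distribution. -/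
theorem abs_lazyKer_torus_sub_le (hd : d ≠ 0) (t : ℕ) (x y : Fin d → ZMod N) :
    |lazyKer t x y - ((N : ℝ) ^ d)⁻¹| ≤ Real.exp (-(4 * t / (d * (N : ℝ) ^ 2))) := by
  have hN : (0 : ℝ) < N := by exact_mod_cast NeZero.pos N
  have hd' : (0 : ℝ) < d := by exact_mod_cast Nat.pos_of_ne_zero hd
  rw [lazyKer_sub]
  set z := x - y
  have h0 : torusEigenvalue (0 : Fin d → ZMod N) = 1 := by
    simp [torusEigenvalue, hd'.ne']
  have hc0 : torusChar (0 : Fin d → ZMod N) z = 1 := by simp [torusChar]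
  have h := lazyKer_torus_eq hd t z
  rw [← Finset.add_sum_erase _ _ (Finset.mem_univ 0), h0, hc0] at h
  have h1 : ((lazyKer t z 0 - ((N : ℝ) ^ d)⁻¹ : ℝ) : ℂ) = ((N : ℂ) ^ d)⁻¹ *
      ∑ ξ ∈ Finset.univ.erase 0, (torusEigenvalue ξ : ℂ) ^ t * torusChar ξ z := by
    push_cast
    rw [h]
    simp only [Complex.ofReal_one, one_pow]
    ring
  rw [← Real.norm_eq_abs, ← Complex.norm_real, h1, norm_mul, norm_inv, norm_pow,
    Complex.norm_natCast, inv_mul_le_iff₀ (by positivity)]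
  refine (norm_sum_le _ _).trans ?_
  have hcard : ((Finset.univ : Finset (Fin d → ZMod N)).card : ℝ) = (N : ℝ) ^ d := by
    simp [ZMod.card]
  calc _ ≤ ∑ ξ ∈ (Finset.univ : Finset (Fin d → ZMod N)).erase 0,
        Real.exp (-(4 * t / (d * (N : ℝ) ^ 2))) := by
        refine Finset.sum_le_sum fun ξ hξ => ?_
        rw [norm_mul, torusChar_norm, mul_one, norm_pow, Complex.norm_real, Real.norm_eq_abs,
          abs_of_nonneg (torusEigenvalue_nonneg hd ξ)]
        refine (torusEigenvalue_pow_le hd t ξ).trans ?_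
        rw [← Real.exp_sum, ← Finset.mul_sum, Real.exp_le_exp]
        have : (1 : ℝ) ≤ ∑ i, ((ξ i).valMinAbs : ℝ) ^ 2 := by
          obtain ⟨i, hi⟩ := Function.ne_iff.mp (Finset.ne_of_mem_erase hξ)
          have h1 : (ξ i).valMinAbs ≠ 0 := by
            rw [Ne, ZMod.valMinAbs_eq_zero]
            exact hi
          have h2 : (1 : ℝ) ≤ ((ξ i).valMinAbs : ℝ) ^ 2 := by
            have : 1 ≤ (ξ i).valMinAbs ^ 2 := (one_le_sq_iff_one_le_abs _).2 (Int.one_le_abs h1)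
            exact_mod_cast this
          exact h2.trans (Finset.single_le_sum (f := fun i => ((ξ i).valMinAbs : ℝ) ^ 2)
            (fun i _ => sq_nonneg _) (Finset.mem_univ i))
        have h4 : (0 : ℝ) ≤ 4 * t / (d * (N : ℝ) ^ 2) := by positivity
        nlinarith
    _ ≤ ∑ ξ : Fin d → ZMod N, Real.exp (-(4 * t / (d * (N : ℝ) ^ 2))) :=
        Finset.sum_le_sum_of_subset_of_nonneg (Finset.erase_subset _ _)
          fun _ _ _ => (Real.exp_pos _).le
    _ = _ := by rw [Finset.sum_const, nsmul_eq_mul, hcard]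

theorem geom_sum_exp_le {a : ℝ} (ha : 0 < a) (n : ℕ) :
    ∑ k ∈ Finset.range n, Real.exp (-(a * k)) ≤ 1 + 1 / a := by
  have hlt : Real.exp (-a) < 1 := by rw [Real.exp_lt_one_iff]; linarith
  have h : ∀ k : ℕ, Real.exp (-(a * k)) = Real.exp (-a) ^ k := fun k => by
    rw [← Real.exp_nat_mul]
    congr 1
    ring
  simp only [h]
  have h1 := geom_sum_eq hlt.ne n
  have h2 : (1 - Real.exp (-a))⁻¹ ≤ 1 + 1 / a := by
    rw [inv_le_iff_one_le_mul₀ (by linarith)]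
    have h3 : Real.exp (-a) * (1 + a) ≤ 1 := by
      have := Real.add_one_le_exp a
      have h4 : Real.exp (-a) * Real.exp a = 1 := by rw [← Real.exp_add]; simp
      nlinarith [Real.exp_pos (-a)]
    have : (1 + 1 / a) * (1 - Real.exp (-a)) - 1 = (1 - Real.exp (-a) * (1 + a)) / a := by
      field_simp
      ring
    have h5 : 0 ≤ (1 - Real.exp (-a) * (1 + a)) / a := div_nonneg (by linarith) ha.le
    linarith
  refine le_trans ?_ h2
  rw [h1, ← neg_div_neg_eq, inv_eq_one_div]
  refine div_le_div₀ zero_le_one ?_ (by linarith) (by linarith)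
  have := pow_nonneg (Real.exp_pos (-a)).le n
  linarith

theorem zmod_sum_val (f : ℕ → ℝ) : ∑ j : ZMod N, f j.val = ∑ k ∈ Finset.range N, f k := by
  obtain ⟨n, rfl⟩ := Nat.exists_eq_succ_of_ne_zero (NeZero.ne N)
  exact Fin.sum_univ_eq_sum_range f (n + 1)

theorem gaussian_zmod_sum_le {b : ℝ} (hb : 0 < b) :
    ∑ j : ZMod N, Real.exp (-b * (j.valMinAbs : ℝ) ^ 2) ≤ 6 * (1 + 1 / √b) := by
  have hs : 0 < √b := Real.sqrt_pos.2 hb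
  have hss : √b * √b = b := Real.mul_self_sqrt hb.le
  set g : ℕ → ℝ := fun k => Real.exp 1 * Real.exp (-(2 * √b * k)) with hg
  have hgp : ∀ k, 0 ≤ g k := fun k => by positivity
  have hle : ∀ k : ℕ, Real.exp (-b * (k : ℝ) ^ 2) ≤ g k := fun k => by
    rw [hg]
    simp only
    rw [← Real.exp_add, Real.exp_le_exp]
    have : (1 - √b * k) ^ 2 = 1 - 2 * √b * k + b * (k : ℝ) ^ 2 := by
      linear_combination (k : ℝ) ^ 2 * hss
    nlinarith [sq_nonneg (1 - √b * k)]
  have hS : ∑ k ∈ Finset.range N, g k ≤ Real.exp 1 * (1 + 1 / (2 * √b)) := by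
    rw [hg, ← Finset.mul_sum]
    exact mul_le_mul_of_nonneg_left (geom_sum_exp_le (by positivity) N) (Real.exp_pos _).le
  have hterm : ∀ j : ZMod N, Real.exp (-b * (j.valMinAbs : ℝ) ^ 2) ≤
      g j.val + g (N - 1 - j.val) := fun j => by
    have h1 : (j.valMinAbs : ℝ) ^ 2 = ((j.valMinAbs.natAbs : ℕ) : ℝ) ^ 2 := by
      rw [Nat.cast_natAbs, Int.cast_abs, sq_abs]
    rw [h1, ZMod.valMinAbs_natAbs_eq_min]
    rcases min_choice j.val (N - j.val) with h | h
    · rw [h]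
      linarith [hle j.val, hgp (N - 1 - j.val)]
    · rw [h]
      refine (hle _).trans ?_
      have : g (N - j.val) ≤ g (N - 1 - j.val) := by
        rw [hg]
        simp only
        gcongr
        omega
      linarith [hgp j.val]
  calc _ ≤ ∑ j : ZMod N, (g j.val + g (N - 1 - j.val)) := Finset.sum_le_sum fun j _ => hterm j
    _ = 2 * ∑ k ∈ Finset.range N, g k := by
        rw [Finset.sum_add_distrib, zmod_sum_val g, zmod_sum_val fun k => g (N - 1 - k),
          Finset.sum_range_reflect g N, two_mul]
    _ ≤ 2 * (Real.exp 1 * (1 + 1 / (2 * √b))) := by linarith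
    _ ≤ 6 * (1 + 1 / √b) := by
        have h1 := Real.exp_one_lt_d9
        have h2 : 1 / (2 * √b) ≤ 1 / √b := by
          apply one_div_le_one_div_of_le hs
          linarith
        have h3 : 0 < 1 / √b := by positivity
        have h4 : 0 < 1 / (2 * √b) := by positivity
        nlinarith

/-- The on-diagonal heat kernel bound on the torus. -/
theorem lazyKer_torus_le (hd : d ≠ 0) {t : ℕ} (ht : t ≠ 0) (x y : Fin d → ZMod N) :
    lazyKer t x y ≤ (6 * d * (1 / N + 1 / √(t : ℝ))) ^ d := by
  have hN : (0 : ℝ) < N := by exact_mod_cast NeZero.pos N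
  have hd' : (0 : ℝ) < d := by exact_mod_cast Nat.pos_of_ne_zero hd
  have hd1 : (1 : ℝ) ≤ d := by exact_mod_cast Nat.one_le_iff_ne_zero.2 hd
  have ht' : (0 : ℝ) < t := by exact_mod_cast Nat.pos_of_ne_zero ht
  rw [lazyKer_sub]
  set z := x - y
  set b : ℝ := 4 * t / (d * (N : ℝ) ^ 2) with hb
  have hbp : 0 < b := by positivity
  have h1 : lazyKer t z 0 ≤ ((N : ℝ) ^ d)⁻¹ * ∑ ξ : Fin d → ZMod N, torusEigenvalue ξ ^ t := by
    have h := congrArg norm (lazyKer_torus_eq hd t z)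
    rw [Complex.norm_real, Real.norm_eq_abs, abs_of_nonneg (lazyKer_nonneg t z 0), norm_mul,
      norm_inv, norm_pow, Complex.norm_natCast] at h
    rw [h]
    refine mul_le_mul_of_nonneg_left ((norm_sum_le _ _).trans ?_) (by positivity)
    refine Finset.sum_le_sum fun ξ _ => ?_
    rw [norm_mul, torusChar_norm, mul_one, norm_pow, Complex.norm_real, Real.norm_eq_abs,
      abs_of_nonneg (torusEigenvalue_nonneg hd ξ)]
  have h2 : ∑ ξ : Fin d → ZMod N, torusEigenvalue ξ ^ t ≤
      (∑ j : ZMod N, Real.exp (-b * (j.valMinAbs : ℝ) ^ 2)) ^ d := by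
    have : (∑ j : ZMod N, Real.exp (-b * (j.valMinAbs : ℝ) ^ 2)) ^ d =
        ∏ _i : Fin d, ∑ j : ZMod N, Real.exp (-b * (j.valMinAbs : ℝ) ^ 2) := by simp
    rw [this, Finset.prod_univ_sum, Fintype.piFinset_univ]
    exact Finset.sum_le_sum fun ξ _ => torusEigenvalue_pow_le hd t ξ
  have h0 : 0 ≤ ∑ j : ZMod N, Real.exp (-b * (j.valMinAbs : ℝ) ^ 2) :=
    Finset.sum_nonneg fun _ _ => (Real.exp_pos _).le
  calc lazyKer t z 0 ≤ ((N : ℝ) ^ d)⁻¹ * (6 * (1 + 1 / √b)) ^ d := by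
        refine h1.trans (mul_le_mul_of_nonneg_left (h2.trans ?_) (by positivity))
        exact pow_le_pow_left₀ h0 (gaussian_zmod_sum_le hbp) d
    _ = (1 / N * (6 * (1 + 1 / √b))) ^ d := by
        rw [mul_pow (1 / (N : ℝ)), one_div (N : ℝ), inv_pow]
    _ ≤ _ := by
        refine pow_le_pow_left₀ (by positivity) ?_ d
        have hs : √(t : ℝ) / (d * N) ≤ √b := by
          apply Real.le_sqrt_of_sq_le
          rw [div_pow, Real.sq_sqrt ht'.le, hb, div_le_div_iff₀ (by positivity) (by positivity)]
          have : (0 : ℝ) ≤ t * (d * (N : ℝ) ^ 2) * (4 * d - 1) := by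
            apply mul_nonneg (by positivity) (by linarith)
          nlinarith
        have hst : 0 < √(t : ℝ) := Real.sqrt_pos.2 ht'
        have h3 : 1 / √b ≤ d * N / √(t : ℝ) := by
          rw [← one_div_div (√(t : ℝ))]
          exact one_div_le_one_div_of_le (by positivity) hs
        calc (1 / N : ℝ) * (6 * (1 + 1 / √b)) ≤ 1 / N * (6 * (1 + d * N / √(t : ℝ))) := by gcongr
          _ = 6 * (1 / N) + 6 * d * (1 / √(t : ℝ)) := by field_simp
          _ ≤ 6 * d * (1 / N) + 6 * d * (1 / √(t : ℝ)) := by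
              gcongr
              linarith
          _ = _ := by ring

end TorusFourier

section Escape

variable {d : ℕ} {R : Type*} [CommRing R]

/-- The probability that the simple random walk stays in `B` at the times `1, …, m`. -/
def stayProb (B : Set (Fin d → R)) : ℕ → (Fin d → R) → ℝ
  | 0 => fun _ => 1
  | m + 1 => srwAvg d R (B.indicator (stayProb B m))

/-- The probability that the simple random walk stays in `B` at all positive times. -/
def escProb (B : Set (Fin d → R)) (x : Fin d → R) : ℝ := ⨅ m, stayProb B m x

variable (B : Set (Fin d → R))

theorem stayProb_nonneg (m : ℕ) (x : Fin d → R) : 0 ≤ stayProb B m x := by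
  induction m generalizing x with
  | zero => exact zero_le_one
  | succ m ih => exact srwAvg_nonneg (fun y => Set.indicator_nonneg (fun z _ => ih z) y) x

theorem stayProb_succ_le (hd : d ≠ 0) (m : ℕ) (x : Fin d → R) :
    stayProb B (m + 1) x ≤ stayProb B m x := by
  induction m generalizing x with
  | zero =>
    refine (srwAvg_mono (g := fun _ => 1) (fun y => ?_) x).trans_eq (srwAvg_const hd 1 x)
    exact Set.indicator_le' (fun z _ => le_refl _) (fun _ _ => zero_le_one) y
  | succ m ih => exact srwAvg_mono (fun y => Set.indicator_le_indicator (ih y)) x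

theorem stayProb_le_one (hd : d ≠ 0) (m : ℕ) (x : Fin d → R) : stayProb B m x ≤ 1 :=
  antitone_nat_of_succ_le (f := fun m => stayProb B m x)
    (fun m => stayProb_succ_le B hd m x) (Nat.zero_le m)

theorem tendsto_stayProb (hd : d ≠ 0) (x : Fin d → R) :
    Tendsto (fun m => stayProb B m x) atTop (nhds (escProb B x)) :=
  tendsto_atTop_ciInf (antitone_nat_of_succ_le fun m => stayProb_succ_le B hd m x)
    ⟨0, by rintro _ ⟨m, rfl⟩; exact stayProb_nonneg B m x⟩

theorem escProb_nonneg (x : Fin d → R) : 0 ≤ escProb B x :=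
  Real.iInf_nonneg fun m => stayProb_nonneg B m x

theorem escProb_le_one (hd : d ≠ 0) (x : Fin d → R) : escProb B x ≤ 1 :=
  le_of_tendsto' (tendsto_stayProb B hd x) fun m => stayProb_le_one B hd m x

theorem tendsto_srwAvg {f : ℕ → (Fin d → R) → ℝ} {g : (Fin d → R) → ℝ}
    (h : ∀ x, Tendsto (fun m => f m x) atTop (nhds (g x))) (x : Fin d → R) :
    Tendsto (fun m => srwAvg d R (f m) x) atTop (nhds (srwAvg d R g x)) := by
  simp only [srwAvg_apply]
  exact (tendsto_finsetSum _ fun i _ => (h _).add (h _)).const_mul _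

theorem srwAvg_indicator_escProb (hd : d ≠ 0) (x : Fin d → R) :
    srwAvg d R (B.indicator (escProb B)) x = escProb B x := by
  refine tendsto_nhds_unique (tendsto_srwAvg (f := fun m => B.indicator (stayProb B m))
    (fun y => ?_) x) ((tendsto_add_atTop_iff_nat 1).2 (tendsto_stayProb B hd x))
  by_cases hy : y ∈ B
  · simpa [hy] using tendsto_stayProb B hd y
  · simp [hy]

/-- The Laplacian of the hitting probability is the equilibrium measure. -/
theorem sum_lazyKer_escProb (hd : d ≠ 0) (W : Finset (Fin d → R)) (t : ℕ) (x : Fin d → R) :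
    ∑ s ∈ Finset.range t, ∑ y ∈ W, escProb (W : Set (Fin d → R))ᶜ y * lazyKer s x y =
      2 * ((1 - (W : Set (Fin d → R))ᶜ.indicator (escProb (W : Set (Fin d → R))ᶜ) x) -
        (lazyAvg d R ^ t)
          (fun z => 1 - (W : Set (Fin d → R))ᶜ.indicator (escProb (W : Set (Fin d → R))ᶜ) z) x) := by
  set B : Set (Fin d → R) := (W : Set (Fin d → R))ᶜ
  set h : (Fin d → R) → ℝ := fun z => 1 - B.indicator (escProb B) z with hh
  have hP : h - srwAvg d R h = fun z => if z ∈ W then escProb B z else 0 := by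
    have : h = (fun _ => 1) - B.indicator (escProb B) := rfl
    ext z
    rw [this, map_sub]
    simp only [Pi.sub_apply, srwAvg_const hd, srwAvg_indicator_escProb B hd]
    by_cases hz : z ∈ W <;> simp [B, hz]
  rw [← sum_lazyAvg_pow_sub t h x, hP]
  refine Finset.sum_congr rfl fun s _ => ?_
  rw [lazyAvg_pow_eq_sum s W (fun y hy => if_neg hy)]
  exact Finset.sum_congr rfl fun y hy => by rw [if_pos hy]

theorem le_sum_lazyKer_stayProb (hd : d ≠ 0) (W : Finset (Fin d → R)) (m t : ℕ)
    (x : Fin d → R) :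
    2 * ((1 - (W : Set (Fin d → R))ᶜ.indicator (stayProb (W : Set (Fin d → R))ᶜ m) x) -
        (lazyAvg d R ^ t)
          (fun z => 1 - (W : Set (Fin d → R))ᶜ.indicator (stayProb (W : Set (Fin d → R))ᶜ m) z) x) ≤
    ∑ s ∈ Finset.range t, ∑ y ∈ W,
      stayProb (W : Set (Fin d → R))ᶜ (m + 1) y * lazyKer s x y := by
  set B : Set (Fin d → R) := (W : Set (Fin d → R))ᶜ
  set h : (Fin d → R) → ℝ := fun z => 1 - B.indicator (stayProb B m) z with hh
  have hP : ∀ z, (h - srwAvg d R h) z ≤ if z ∈ W then stayProb B (m + 1) z else 0 := by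
    have : h = (fun _ => 1) - B.indicator (stayProb B m) := rfl
    intro z
    rw [this, map_sub]
    have h2 : srwAvg d R (B.indicator (stayProb B m)) z = stayProb B (m + 1) z := rfl
    simp only [Pi.sub_apply, srwAvg_const hd, h2]
    by_cases hz : z ∈ W
    · simp [B, hz]
    · simp [B, hz, stayProb_succ_le _ hd]
  rw [← sum_lazyAvg_pow_sub t h x]
  refine Finset.sum_le_sum fun s _ => (lazyAvg_pow_mono s hP x).trans_eq ?_
  rw [lazyAvg_pow_eq_sum s W (fun y hy => if_neg hy)]
  exact Finset.sum_congr rfl fun y hy => by rw [if_pos hy]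

theorem tendsto_lazyAvg_pow_hit (hd : d ≠ 0) (W : Finset (Fin d → R))
    (hK : ∀ x y : Fin d → R, Tendsto (fun t => lazyKer t x y) atTop (nhds 0))
    (m : ℕ) (x : Fin d → R) :
    Tendsto (fun t => (lazyAvg d R ^ t)
      (fun z => 1 - (W : Set (Fin d → R))ᶜ.indicator (stayProb (W : Set (Fin d → R))ᶜ m) z) x)
      atTop (nhds 0) := by
  have hW : Tendsto (fun t => (lazyAvg d R ^ t) (fun z => if z ∈ W then 1 else 0) x) atTop
      (nhds 0) := by
    have : ∀ t, (lazyAvg d R ^ t) (fun z => if z ∈ W then (1 : ℝ) else 0) x =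
        ∑ y ∈ W, lazyKer t x y := fun t => by
      rw [lazyAvg_pow_eq_sum t W (fun y hy => if_neg hy)]
      exact Finset.sum_congr rfl fun y hy => by rw [if_pos hy, one_mul]
    simp only [this]
    simpa using tendsto_finsetSum W fun y _ => hK x y
  induction m with
  | zero =>
    convert hW using 5 with t z
    by_cases hz : z ∈ W <;> simp [stayProb, hz]
  | succ m ih =>
    set B : Set (Fin d → R) := (W : Set (Fin d → R))ᶜ
    set h : (Fin d → R) → ℝ := fun z => 1 - B.indicator (stayProb B m) z with hh
    have h1 : Tendsto (fun t => (lazyAvg d R ^ t) (srwAvg d R h) x) atTop (nhds 0) := by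
      have : ∀ t, (lazyAvg d R ^ t) (srwAvg d R h) x =
          2 * (lazyAvg d R ^ (t + 1)) h x - (lazyAvg d R ^ t) h x := fun t => by
        have : srwAvg d R h = (2 : ℝ) • lazyAvg d R h - h := by
          ext y; simp only [Pi.sub_apply, Pi.smul_apply, lazyAvg_apply, smul_eq_mul]; ring
        rw [this, map_sub, map_smul, pow_succ, Module.End.mul_apply]
        rfl
      simp only [this]
      simpa using (((tendsto_add_atTop_iff_nat 1).2 ih).const_mul 2).sub ih
    refine squeeze_zero (g := fun t => (lazyAvg d R ^ t) (fun z => if z ∈ W then 1 else 0) x +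
      (lazyAvg d R ^ t) (srwAvg d R h) x) (fun t => ?_) (fun t => ?_) (by simpa using hW.add h1)
    · refine lazyAvg_pow_nonneg t (fun z => ?_) x
      have := Set.indicator_le' (s := B) (f := stayProb B (m + 1)) (g := fun _ => 1)
        (fun z _ => stayProb_le_one B hd _ z) (fun _ _ => zero_le_one) z
      simp only at this
      linarith
    · rw [← Pi.add_apply, ← map_add]
      refine lazyAvg_pow_mono t (fun z => ?_) x
      have h2 : srwAvg d R h z = 1 - stayProb B (m + 1) z := by
        have : h = (fun _ => 1) - B.indicator (stayProb B m) := rfl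
        rw [this, map_sub, Pi.sub_apply, srwAvg_const hd]
        rfl
      rw [Pi.add_apply, h2]
      have h3 := stayProb_le_one B hd (m + 1) z
      by_cases hz : z ∈ W
      · simp [B, hz, h3]
      · simp [B, hz]

/-- The potential of the equilibrium measure is constant on `W`. -/
theorem hasSum_lazyKer_escProb (hd : d ≠ 0) (W : Finset (Fin d → R))
    (hK : ∀ x y : Fin d → R, Summable fun t => lazyKer t x y) {x : Fin d → R} (hx : x ∈ W) :
    HasSum (fun s => ∑ y ∈ W, escProb (W : Set (Fin d → R))ᶜ y * lazyKer s x y) 2 := by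
  set B : Set (Fin d → R) := (W : Set (Fin d → R))ᶜ with hB
  have hxB : ∀ f : (Fin d → R) → ℝ, B.indicator f x = 0 := fun f => by simp [B, hx]
  have hsum : HasSum (fun s => ∑ y ∈ W, escProb B y * lazyKer s x y)
      (∑ y ∈ W, escProb B y * ∑' s, lazyKer s x y) :=
    hasSum_sum fun y _ => (hK x y).hasSum.mul_left _
  convert hsum using 1
  refine le_antisymm ?_ ?_
  · refine ge_of_tendsto' (tendsto_finsetSum W fun y _ =>
      ((tendsto_add_atTop_iff_nat 1).2 (tendsto_stayProb B hd y)).mul_const _) fun m => ?_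
    have h1 : Tendsto (fun t => 2 * ((1 - B.indicator (stayProb B m) x) - (lazyAvg d R ^ t)
          (fun z => 1 - B.indicator (stayProb B m) z) x)) atTop (nhds 2) := by
      rw [hxB]
      have := ((tendsto_lazyAvg_pow_hit hd W
        (fun x y => (hK x y).tendsto_atTop_zero) m x).const_sub 1).const_mul 2
      simpa using this
    refine le_of_tendsto' h1 fun t => (le_sum_lazyKer_stayProb hd W m t x).trans ?_
    rw [Finset.sum_comm]
    refine Finset.sum_le_sum fun y _ => ?_
    rw [← Finset.mul_sum]
    exact mul_le_mul_of_nonneg_left ((hK x y).sum_le_tsum _ fun s _ => lazyKer_nonneg s x y)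
      (stayProb_nonneg B _ y)
  · refine le_of_tendsto' hsum.tendsto_sum_nat fun t => ?_
    rw [sum_lazyKer_escProb hd W t x, ← hB, hxB]
    have : 0 ≤ (lazyAvg d R ^ t) (fun z => 1 - B.indicator (escProb B) z) x := by
      refine lazyAvg_pow_nonneg t (fun z => ?_) x
      have := Set.indicator_le' (s := B) (f := escProb B) (g := fun _ => 1)
        (fun z _ => escProb_le_one B hd z) (fun _ _ => zero_le_one) z
      simp only at this
      linarith
    linarith

end Escape

section Lattice

variable {d : ℕ}

/-- The canonical projection from the lattice onto the torus. -/
def latToTorus (d N : ℕ) (x : Lat d) : Torus d N := Int.castRingHom (ZMod N) ∘ x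

/-- The heat kernel of the torus is that of the lattice plus the contribution of the
other points in the fibre of the projection. -/
theorem lazyKer_latToTorus (N t : ℕ) (x : Lat d) :
    lazyKer t (latToTorus d N x) 0 = lazyKer t x 0 +
      (lazyAvg d ℤ ^ t) (fun w => if w ≠ 0 ∧ latToTorus d N w = 0 then 1 else 0) x := by
  unfold lazyKer
  have h : (delta 0 ∘ fun z => Int.castRingHom (ZMod N) ∘ z) =
      delta (0 : Lat d) + fun w => if w ≠ 0 ∧ latToTorus d N w = 0 then 1 else 0 := by
    ext w
    by_cases hw : w = 0
    · subst hw
      simp [delta]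
    · simp [hw, delta, latToTorus]
  rw [← Pi.add_apply, ← map_add, ← h]
  exact (lazyAvg_pow_comp (srwAvg_comp_ringHom (Int.castRingHom (ZMod N))) t (delta 0) x).symm

theorem lazyKer_lat_le_torus (N t : ℕ) (x : Lat d) :
    lazyKer t x 0 ≤ lazyKer t (latToTorus d N x) 0 := by
  rw [lazyKer_latToTorus]
  exact le_add_of_nonneg_right (lazyAvg_pow_nonneg t (fun w => by split_ifs <;> norm_num) x)

theorem lazyKer_lat_le (hd : d ≠ 0) {t : ℕ} (ht : t ≠ 0) (x y : Lat d) :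
    lazyKer t x y ≤ (6 * d) ^ d * (t : ℝ) ^ (-(d : ℝ) / 2) := by
  rw [lazyKer_sub]
  have h : Tendsto (fun n : ℕ => (6 * d * (1 / ((n : ℝ) + 1) + 1 / √(t : ℝ))) ^ d) atTop
      (nhds ((6 * d * (0 + 1 / √(t : ℝ))) ^ d)) :=
    ((tendsto_one_div_add_atTop_nhds_zero_nat.add_const _).const_mul _).pow d
  have h2 : lazyKer t (x - y) 0 ≤ (6 * d * (0 + 1 / √(t : ℝ))) ^ d := by
    refine ge_of_tendsto' h fun n => ?_
    have := (lazyKer_lat_le_torus (n + 1) t (x - y)).trans (lazyKer_torus_le hd ht _ _)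
    exact_mod_cast this
  refine h2.trans_eq ?_
  rw [zero_add, mul_pow, one_div, Real.sqrt_eq_rpow, ← Real.rpow_neg (by positivity),
    ← Real.rpow_natCast (_ ^ _) d, ← Real.rpow_mul (by positivity)]
  congr 2
  ring

theorem summable_lazyKer_lat (hd : 3 ≤ d) (x y : Lat d) : Summable fun t => lazyKer t x y := by
  rw [← summable_nat_add_iff 1]
  have h : Summable fun t : ℕ => (6 * d : ℝ) ^ d * ((t + 1 : ℕ) : ℝ) ^ (-(d : ℝ) / 2) := by
    refine Summable.mul_left _ ((summable_nat_add_iff 1).2 (Real.summable_nat_rpow.2 ?_))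
    have : (3 : ℝ) ≤ d := by exact_mod_cast hd
    linarith
  exact Summable.of_nonneg_of_le (fun t => lazyKer_nonneg _ _ _)
    (fun t => lazyKer_lat_le (by omega) (Nat.succ_ne_zero t) x y) h

theorem exists_tsum_lazyKer_lat_le (hd : 3 ≤ d) {η : ℝ} (hη : 0 < η) (hη' : η ≤ 1 / 4) :
    ∃ C : ℝ, 0 < C ∧ ∀ t : ℕ, 1 ≤ t → ∀ x y : Lat d,
      ∑' s, lazyKer (s + t) x y ≤ C * (t : ℝ) ^ (-((d : ℝ) / 2 - 1 - η)) := by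
  have hd3 : (3 : ℝ) ≤ d := by exact_mod_cast hd
  have hS : Summable fun s : ℕ => ((s + 1 : ℕ) : ℝ) ^ (-1 - η) :=
    (summable_nat_add_iff 1).2 (Real.summable_nat_rpow.2 (by linarith))
  have hpos : 0 < ∑' s : ℕ, ((s + 1 : ℕ) : ℝ) ^ (-1 - η) :=
    hS.tsum_pos (fun s => by positivity) 0 (by positivity)
  refine ⟨(6 * d) ^ d * ∑' s : ℕ, ((s + 1 : ℕ) : ℝ) ^ (-1 - η), by positivity,
    fun t ht x y => ?_⟩
  have ht0 : (0 : ℝ) < t := by exact_mod_cast ht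
  have hle : ∀ s : ℕ, lazyKer (s + t) x y ≤ ((6 * d) ^ d * (t : ℝ) ^ (-((d : ℝ) / 2 - 1 - η))) *
      ((s + 1 : ℕ) : ℝ) ^ (-1 - η) := fun s => by
    refine (lazyKer_lat_le (by omega) (by omega) x y).trans ?_
    rw [mul_assoc]
    refine mul_le_mul_of_nonneg_left ?_ (by positivity)
    have hst : (0 : ℝ) < ((s + t : ℕ) : ℝ) := by push_cast; positivity
    have : -(d : ℝ) / 2 = -((d : ℝ) / 2 - 1 - η) + (-1 - η) := by ring
    rw [this, Real.rpow_add hst]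
    refine mul_le_mul ?_ ?_ (by positivity) (by positivity)
    · refine Real.rpow_le_rpow_of_nonpos ht0 ?_ (by linarith)
      exact_mod_cast Nat.le_add_left t s
    · refine Real.rpow_le_rpow_of_nonpos (by positivity) ?_ (by linarith)
      exact_mod_cast Nat.add_le_add_left ht s
  calc _ ≤ ∑' s : ℕ, ((6 * d) ^ d * (t : ℝ) ^ (-((d : ℝ) / 2 - 1 - η))) *
        ((s + 1 : ℕ) : ℝ) ^ (-1 - η) :=
        ((summable_nat_add_iff t).2 (summable_lazyKer_lat hd x y)).tsum_le_tsum hle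
          (hS.mul_left _)
    _ = _ := by rw [tsum_mul_left]; ring

/-- The capacity of a finite set of lattice points, as the total escape probability. -/
def latCap (W : Finset (Lat d)) : ℝ := ∑ y ∈ W, escProb (W : Set (Lat d))ᶜ y

theorem latCap_nonneg (W : Finset (Lat d)) : 0 ≤ latCap W :=
  Finset.sum_nonneg fun y _ => escProb_nonneg _ y

theorem exists_le_latCap (hd : 3 ≤ d) :
    ∃ c : ℝ, 0 < c ∧ ∀ W : Finset (Lat d), W.Nonempty → c ≤ latCap W := by
  obtain ⟨C, hC, h⟩ := exists_tsum_lazyKer_lat_le hd (η := 1 / 4) (by norm_num) le_rfl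
  refine ⟨2 / (1 + C), by positivity, fun W ⟨x, hx⟩ => ?_⟩
  have hK := summable_lazyKer_lat (d := d) hd
  have h2 := (hasSum_lazyKer_escProb (by omega) W hK hx).tsum_eq
  rw [Summable.tsum_finsetSum (fun y _ => (hK x y).mul_left _)] at h2
  rw [div_le_iff₀ (by positivity), ← h2, latCap, Finset.sum_mul]
  refine Finset.sum_le_sum fun y _ => ?_
  rw [tsum_mul_left]
  refine mul_le_mul_of_nonneg_left ?_ (escProb_nonneg _ y)
  have h3 := h 1 le_rfl x y
  rw [Nat.cast_one, Real.one_rpow, mul_one] at h3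
  rw [(hK x y).tsum_eq_zero_add]
  exact add_le_add (lazyKer_le_one (by omega) 0 x y) h3

theorem lazyAvg_pow_sq_dist (hd : d ≠ 0) (y : Lat d) (t : ℕ) (x : Lat d) :
    (lazyAvg d ℤ ^ t) (fun z => ∑ i, ((z i - y i : ℤ) : ℝ) ^ 2) x =
      ∑ i, ((x i - y i : ℤ) : ℝ) ^ 2 + t / 2 := by
  have hd' : (d : ℝ) ≠ 0 := by exact_mod_cast hd
  set f : Lat d → ℝ := fun z => ∑ i, ((z i - y i : ℤ) : ℝ) ^ 2 with hf
  have hP : srwAvg d ℤ f = f + fun _ => 1 := by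
    ext x
    have h : ∀ i : Fin d, f (x + Pi.single i 1) + f (x - Pi.single i 1) = 2 * f x + 2 := by
      intro i
      have h2 : ∀ j : Fin d, (((x + Pi.single i 1 : Lat d) j - y j : ℤ) : ℝ) ^ 2 +
          (((x - Pi.single i 1 : Lat d) j - y j : ℤ) : ℝ) ^ 2 =
          2 * ((x j - y j : ℤ) : ℝ) ^ 2 + if j = i then 2 else 0 := fun j => by
        by_cases hj : j = i
        · subst hj; simp; ring
        · simp [hj]; ring
      simp only [hf]
      rw [← Finset.sum_add_distrib, Finset.sum_congr rfl fun j _ => h2 j,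
        Finset.sum_add_distrib, ← Finset.mul_sum]
      simp
    rw [srwAvg_apply, Finset.sum_congr rfl fun i _ => h i]
    simp only [Finset.sum_const, Finset.card_univ, Fintype.card_fin, nsmul_eq_mul, Pi.add_apply]
    field_simp
  induction t with
  | zero => simp [hf]
  | succ t ih =>
    have : lazyAvg d ℤ f = f + fun _ => 1 / 2 := by
      ext z
      rw [lazyAvg_apply, hP]
      simp
      ring
    rw [pow_succ, Module.End.mul_apply, this, map_add, Pi.add_apply, ih, lazyAvg_pow_const hd]
    push_cast
    ring

theorem latCap_le (hd : 3 ≤ d) {r : ℕ} (hr : 1 ≤ r) (W : Finset (Lat d))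
    (hW : ∀ y ∈ W, ∀ i, |y i| ≤ r) : latCap W ≤ 4 * 5 ^ d * (r : ℝ) ^ (d - 2) := by
  have hd0 : d ≠ 0 := by omega
  have hr0 : (0 : ℝ) < r := by exact_mod_cast hr
  set S : Finset (Lat d) := Fintype.piFinset fun _ => Finset.Icc (-(2 * r : ℤ)) (2 * r) with hS
  have hcard : (S.card : ℝ) = (4 * r + 1) ^ d := by
    rw [hS, Fintype.card_piFinset]
    simp only [Int.card_Icc, Finset.prod_const, Finset.card_univ, Fintype.card_fin]
    have : (2 * (r : ℤ) + 1 - -(2 * r)).toNat = 4 * r + 1 := by omega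
    rw [this]
    push_cast
    ring
  have hball : ∀ y ∈ W, ∀ s : ℕ, 1 - s / (2 * (r : ℝ) ^ 2) ≤ ∑ x ∈ S, lazyKer s x y := by
    intro y hy s
    have h1 : ∑ x ∈ S, lazyKer s x y =
        (lazyAvg d ℤ ^ s) (fun z => if z ∈ S then 1 else 0) y := by
      rw [lazyAvg_pow_eq_sum s S (fun y hy => if_neg hy)]
      exact Finset.sum_congr rfl fun x hx => by rw [if_pos hx, one_mul, lazyKer_comm]
    have h2 : (lazyAvg d ℤ ^ s) ((fun _ => 1) - ((r : ℝ) ^ 2)⁻¹ •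
        fun z => ∑ i, ((z i - y i : ℤ) : ℝ) ^ 2) y = 1 - s / (2 * (r : ℝ) ^ 2) := by
      rw [map_sub, map_smul, Pi.sub_apply, Pi.smul_apply, lazyAvg_pow_const hd0,
        lazyAvg_pow_sq_dist hd0]
      simp
      field_simp
    rw [h1, ← h2]
    refine lazyAvg_pow_mono s (fun z => ?_) y
    simp only [Pi.sub_apply, Pi.smul_apply, smul_eq_mul]
    have h0 : 0 ≤ ∑ i, ((z i - y i : ℤ) : ℝ) ^ 2 := Finset.sum_nonneg fun _ _ => sq_nonneg _
    split_ifs with hz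
    · have : 0 ≤ ((r : ℝ) ^ 2)⁻¹ * ∑ i, ((z i - y i : ℤ) : ℝ) ^ 2 := by positivity
      linarith
    · rw [hS, Fintype.mem_piFinset] at hz
      push Not at hz
      obtain ⟨i, hi⟩ := hz
      rw [Finset.mem_Icc, not_and_or] at hi
      have hyi := abs_le.1 (hW y hy i)
      have h3 : (r : ℤ) ≤ |z i - y i| := by
        rcases hi with hi | hi
        · rw [le_abs]; right; omega
        · rw [le_abs]; left; omega
      have h4 : (r : ℝ) ≤ |((z i - y i : ℤ) : ℝ)| := by exact_mod_cast h3
      have h5 : (r : ℝ) ^ 2 ≤ ((z i - y i : ℤ) : ℝ) ^ 2 := by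
        rw [← sq_abs ((z i - y i : ℤ) : ℝ)]
        exact pow_le_pow_left₀ hr0.le h4 2
      have h6 := h5.trans (Finset.single_le_sum
        (f := fun i => ((z i - y i : ℤ) : ℝ) ^ 2) (fun i _ => sq_nonneg _) (Finset.mem_univ i))
      have h7 : 1 ≤ ((r : ℝ) ^ 2)⁻¹ * ∑ i, ((z i - y i : ℤ) : ℝ) ^ 2 := by
        rw [le_inv_mul_iff₀ (by positivity), mul_one]
        exact h6
      linarith
  have hpt : ∀ x ∈ S, ∑ s ∈ Finset.range (r ^ 2),
      ∑ y ∈ W, escProb (W : Set (Lat d))ᶜ y * lazyKer s x y ≤ 2 := fun x _ => by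
    rw [sum_lazyKer_escProb hd0 W (r ^ 2) x]
    have h0 : ∀ z, (W : Set (Lat d))ᶜ.indicator (escProb (W : Set (Lat d))ᶜ) z ≤ 1 := fun z =>
      Set.indicator_le' (fun z _ => escProb_le_one _ hd0 z) (fun _ _ => zero_le_one) z
    have h1 : 0 ≤ (W : Set (Lat d))ᶜ.indicator (escProb (W : Set (Lat d))ᶜ) x :=
      Set.indicator_nonneg (fun z _ => escProb_nonneg _ z) x
    have h2 := lazyAvg_pow_nonneg (r ^ 2) (f := fun z => 1 -
      (W : Set (Lat d))ᶜ.indicator (escProb (W : Set (Lat d))ᶜ) z)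
      (fun z => sub_nonneg.2 (h0 z)) x
    linarith
  have hlow : latCap W * ((r : ℝ) ^ 2 / 2) ≤ ∑ x ∈ S, ∑ s ∈ Finset.range (r ^ 2),
      ∑ y ∈ W, escProb (W : Set (Lat d))ᶜ y * lazyKer s x y := by
    rw [Finset.sum_comm]
    have h1 : ∀ s ∈ Finset.range (r ^ 2), latCap W * (1 / 2) ≤
        ∑ x ∈ S, ∑ y ∈ W, escProb (W : Set (Lat d))ᶜ y * lazyKer s x y := fun s hs => by
      rw [Finset.sum_comm, latCap, Finset.sum_mul]
      refine Finset.sum_le_sum fun y hy => ?_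
      rw [← Finset.mul_sum]
      refine mul_le_mul_of_nonneg_left (le_trans ?_ (hball y hy s)) (escProb_nonneg _ y)
      have : (s : ℝ) ≤ (r : ℝ) ^ 2 := by exact_mod_cast (Finset.mem_range.1 hs).le
      have h3 : (s : ℝ) / (2 * (r : ℝ) ^ 2) ≤ 1 / 2 := by
        rw [div_le_iff₀ (by positivity)]
        linarith
      linarith
    refine le_trans (le_of_eq ?_) (Finset.sum_le_sum h1)
    simp
    ring
  have hup := hlow.trans (Finset.sum_le_sum hpt)
  rw [Finset.sum_const, nsmul_eq_mul, hcard] at hup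
  have h5 : (4 * (r : ℝ) + 1) ^ d ≤ 5 ^ d * ((r : ℝ) ^ (d - 2) * (r : ℝ) ^ 2) := by
    rw [← pow_add, Nat.sub_add_cancel (by omega), ← mul_pow]
    refine pow_le_pow_left₀ (by positivity) ?_ d
    have : (1 : ℝ) ≤ r := by exact_mod_cast hr
    linarith
  have h6 : latCap W * (r : ℝ) ^ 2 ≤ (4 * 5 ^ d * (r : ℝ) ^ (d - 2)) * (r : ℝ) ^ 2 := by
    linarith
  exact le_of_mul_le_mul_right h6 (by positivity)

theorem lazyAvg_pow_cosh (hd : d ≠ 0) (a : ℝ) (i : Fin d) (t : ℕ) (x : Lat d) :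
    (lazyAvg d ℤ ^ t) (fun z => Real.cosh (a * z i)) x ≤
      Real.exp (a ^ 2 / 2) ^ t * Real.cosh (a * x i) := by
  have hd' : (0 : ℝ) < d := by exact_mod_cast Nat.pos_of_ne_zero hd
  have h1 : 1 ≤ Real.cosh a := Real.one_le_cosh a
  have hP : ∀ x : Lat d, srwAvg d ℤ (fun z => Real.cosh (a * z i)) x =
      (1 + (Real.cosh a - 1) / d) * Real.cosh (a * x i) := by
    intro x
    have h : ∀ j : Fin d, Real.cosh (a * ((x + Pi.single j 1 : Lat d) i : ℝ)) +
        Real.cosh (a * ((x - Pi.single j 1 : Lat d) i : ℝ)) =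
        2 * Real.cosh (a * x i) + if i = j then
          2 * (Real.cosh a - 1) * Real.cosh (a * x i) else 0 := fun j => by
      by_cases hj : i = j
      · subst hj
        simp only [Pi.add_apply, Pi.sub_apply, Pi.single_eq_same, if_true]
        push_cast
        rw [mul_add, mul_sub, mul_one, Real.cosh_add, Real.cosh_sub]
        ring
      · simp [hj]
        ring
    rw [srwAvg_apply, Finset.sum_congr rfl fun j _ => h j]
    simp only [Finset.sum_add_distrib, Finset.sum_const, Finset.card_univ, Fintype.card_fin,
      nsmul_eq_mul, Finset.sum_ite_eq, Finset.mem_univ, if_true]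
    field_simp
  rw [lazyAvg_pow_eigen hP]
  refine mul_le_mul_of_nonneg_right ?_ (Real.cosh_pos _).le
  have h2 : (Real.cosh a - 1) / d ≤ Real.cosh a - 1 :=
    div_le_self (by linarith) (by exact_mod_cast Nat.one_le_iff_ne_zero.2 hd)
  have h3 : 0 ≤ (Real.cosh a - 1) / d := div_nonneg (by linarith) hd'.le
  refine pow_le_pow_left₀ (by linarith) ?_ t
  have := Real.cosh_le_exp_half_sq a
  linarith

/-- The contribution of the other points in a fibre is exponentially small at small times. -/
theorem lazyAvg_pow_fibre_le (hd : d ≠ 0) {N : ℕ} {a : ℝ} (ha : 0 ≤ a) (t : ℕ)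
    (x : Lat d) (hx : ∀ i, |x i| * 2 ≤ N) :
    (lazyAvg d ℤ ^ t) (fun w => if w ≠ 0 ∧ latToTorus d N w = 0 then 1 else 0) x ≤
      2 * d * Real.exp (t * a ^ 2 / 2 - a * N / 2) := by
  have hle : ∀ w : Lat d, (if w ≠ 0 ∧ latToTorus d N w = 0 then (1 : ℝ) else 0) ≤
      (∑ i, (2 * Real.exp (-(a * N))) • fun z : Lat d => Real.cosh (a * z i)) w := by
    intro w
    have hnn : ∀ i, 0 ≤ 2 * Real.exp (-(a * N)) * Real.cosh (a * w i) := fun i => by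
      have := Real.cosh_pos (a * w i)
      positivity
    simp only [Finset.sum_apply, Pi.smul_apply, smul_eq_mul]
    split_ifs with hw
    · obtain ⟨i, hi⟩ := Function.ne_iff.mp hw.1
      have h1 : ((w i : ℤ) : ZMod N) = 0 := congrFun hw.2 i
      rw [ZMod.intCast_zmod_eq_zero_iff_dvd] at h1
      have h2 : (N : ℤ) ≤ |w i| := Int.le_of_dvd (abs_pos.2 hi) ((dvd_abs _ _).2 h1)
      have h3 : (N : ℝ) ≤ |(w i : ℝ)| := by exact_mod_cast h2
      refine le_trans ?_ (Finset.single_le_sum (fun i _ => hnn i) (Finset.mem_univ i))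
      rw [← Real.cosh_abs, abs_mul, abs_of_nonneg ha, Real.cosh_eq]
      have h4 : Real.exp (a * N) ≤ Real.exp (a * |(w i : ℝ)|) :=
        Real.exp_le_exp.2 (mul_le_mul_of_nonneg_left h3 ha)
      have h5 : Real.exp (-(a * N)) * Real.exp (a * N) = 1 := by rw [← Real.exp_add]; simp
      have h6 := Real.exp_pos (-(a * |(w i : ℝ)|))
      have h7 := Real.exp_pos (-(a * N))
      have h8 := mul_le_mul_of_nonneg_left h4 h7.le
      have h9 := mul_pos h7 h6
      nlinarith
    · exact Finset.sum_nonneg fun i _ => hnn i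
  refine (lazyAvg_pow_mono t hle x).trans ?_
  rw [map_sum, Finset.sum_apply]
  calc _ ≤ ∑ _i : Fin d, 2 * Real.exp (t * a ^ 2 / 2 - a * N / 2) := by
        refine Finset.sum_le_sum fun i _ => ?_
        rw [map_smul, Pi.smul_apply, smul_eq_mul, mul_assoc]
        refine mul_le_mul_of_nonneg_left ?_ zero_le_two
        have h1 : Real.cosh (a * x i) ≤ Real.exp (a * N / 2) := by
          rw [← Real.cosh_abs, abs_mul, abs_of_nonneg ha]
          have h2 : |(x i : ℝ)| * 2 ≤ N := by exact_mod_cast hx i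
          have h3 : a * |(x i : ℝ)| ≤ a * N / 2 := by nlinarith
          have h4 : 0 ≤ a * |(x i : ℝ)| := by positivity
          rw [Real.cosh_eq]
          have := Real.exp_le_exp.2 h3
          have := Real.exp_le_exp.2 (show -(a * |(x i : ℝ)|) ≤ a * N / 2 by linarith)
          linarith
        calc _ ≤ Real.exp (-(a * N)) * (Real.exp (a ^ 2 / 2) ^ t * Real.exp (a * N / 2)) := by
              refine mul_le_mul_of_nonneg_left ((lazyAvg_pow_cosh hd a i t x).trans ?_)
                (Real.exp_pos _).le
              exact mul_le_mul_of_nonneg_left h1 (by positivity)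
          _ = _ := by
              rw [← Real.exp_nat_mul, ← Real.exp_add, ← Real.exp_add]
              congr 1
              ring
    _ = _ := by
        simp
        ring

end Lattice

section TorusPotential

variable {d N : ℕ}

/-- The probability that the simple random walk stays in `B` at the times `0, …, m`. -/
def avoidProb {R : Type*} [CommRing R] (B : Set (Fin d → R)) (m : ℕ) : (Fin d → R) → ℝ :=
  B.indicator (stayProb B m)

/-- The expected number of steps that the simple random walk needs to leave `B`. -/
def meanExit {R : Type*} [CommRing R] (B : Set (Fin d → R)) (x : Fin d → R) : ℝ :=
  ∑' m, avoidProb B m x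

section Generic

variable {R : Type*} [CommRing R] (B : Set (Fin d → R))

theorem avoidProb_nonneg (m : ℕ) (x : Fin d → R) : 0 ≤ avoidProb B m x :=
  Set.indicator_nonneg (fun y _ => stayProb_nonneg B m y) x

theorem avoidProb_of_notMem (m : ℕ) {x : Fin d → R} (hx : x ∉ B) : avoidProb B m x = 0 :=
  Set.indicator_of_notMem hx _

theorem avoidProb_succ_of_mem (m : ℕ) {x : Fin d → R} (hx : x ∈ B) :
    avoidProb B (m + 1) x = srwAvg d R (avoidProb B m) x :=
  Set.indicator_of_mem hx _

theorem avoidProb_zero_of_mem {x : Fin d → R} (hx : x ∈ B) : avoidProb B 0 x = 1 :=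
  Set.indicator_of_mem hx _

theorem meanExit_nonneg (x : Fin d → R) : 0 ≤ meanExit B x :=
  tsum_nonneg fun m => avoidProb_nonneg B m x

theorem meanExit_of_notMem {x : Fin d → R} (hx : x ∉ B) : meanExit B x = 0 := by
  simp [meanExit, avoidProb_of_notMem B _ hx]

theorem srwAvg_sum {ι : Type*} (s : Finset ι) (f : ι → (Fin d → R) → ℝ) (x : Fin d → R) :
    srwAvg d R (fun y => ∑ i ∈ s, f i y) x = ∑ i ∈ s, srwAvg d R (f i) x := by
  have h : (fun y => ∑ i ∈ s, f i y) = ∑ i ∈ s, f i := by ext; simp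
  rw [h, map_sum, Finset.sum_apply]

theorem sum_srwAvg [Fintype R] (hd : d ≠ 0) (f : (Fin d → R) → ℝ) :
    ∑ x, srwAvg d R f x = ∑ x, f x := by
  have hd' : (d : ℝ) ≠ 0 := by exact_mod_cast hd
  simp only [srwAvg_apply]
  rw [← Finset.mul_sum, Finset.sum_comm]
  have h : ∀ i : Fin d, ∑ x : Fin d → R, (f (x + Pi.single i 1) + f (x - Pi.single i 1)) =
      2 * ∑ x, f x := fun i => by
    rw [Finset.sum_add_distrib,
      Fintype.sum_equiv (Equiv.addRight (Pi.single i 1)) (fun x => f (x + Pi.single i 1)) f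
        fun _ => rfl,
      Fintype.sum_equiv (Equiv.subRight (Pi.single i 1)) (fun x => f (x - Pi.single i 1)) f
        fun _ => rfl]
    ring
  rw [Finset.sum_congr rfl fun i _ => h i]
  simp only [Finset.sum_const, Finset.card_univ, Fintype.card_fin, nsmul_eq_mul]
  field_simp

theorem sub_srwAvg_sum_avoidProb (M : ℕ) {x : Fin d → R} (hx : x ∈ B) :
    ∑ m ∈ Finset.range M, avoidProb B m x -
      srwAvg d R (fun y => ∑ m ∈ Finset.range M, avoidProb B m y) x =
      1 - avoidProb B M x := by
  have h := Finset.sum_range_succ' (fun m => avoidProb B m x) M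
  rw [Finset.sum_range_succ, avoidProb_zero_of_mem B hx] at h
  rw [srwAvg_sum, ← Finset.sum_congr rfl fun m _ => avoidProb_succ_of_mem B m hx]
  linarith

end Generic

/-- The equilibrium charge of the complement of `B` on the torus. -/
def torusCharge (B : Set (Torus d N)) (y : Torus d N) : ℝ :=
  1 - (meanExit B y - srwAvg d _ (meanExit B) y)

theorem torusCharge_of_notMem {B : Set (Torus d N)} {y : Torus d N}
    (hy : y ∉ B) : 0 ≤ torusCharge B y := by
  rw [torusCharge, meanExit_of_notMem B hy]
  linarith [srwAvg_nonneg (meanExit_nonneg B) y]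

theorem latToTorus_sub (x y : Lat d) :
    latToTorus d N (x - y) = latToTorus d N x - latToTorus d N y := by
  ext; simp [latToTorus]

variable [NeZero N]

theorem card_torus : (Fintype.card (Torus d N) : ℝ) = (N : ℝ) ^ d := by
  simp [ZMod.card]

theorem exists_lazyKer_torus_ge (hd : d ≠ 0) :
    ∃ t : ℕ, ∀ x y : Torus d N, ((N : ℝ) ^ d)⁻¹ / 2 ≤ lazyKer t x y := by
  have hN : (0 : ℝ) < N := by exact_mod_cast NeZero.pos N
  have hd' : (0 : ℝ) < d := by exact_mod_cast Nat.pos_of_ne_zero hd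
  have h : Tendsto (fun t : ℕ => Real.exp (-(4 * t / (d * (N : ℝ) ^ 2)))) atTop (nhds 0) := by
    refine Real.tendsto_exp_neg_atTop_nhds_zero.comp ?_
    refine Tendsto.atTop_div_const (by positivity) ?_
    exact tendsto_natCast_atTop_atTop.const_mul_atTop (by norm_num)
  obtain ⟨t, ht⟩ := (h.eventually (gt_mem_nhds
    (show (0 : ℝ) < ((N : ℝ) ^ d)⁻¹ / 2 by positivity))).exists
  refine ⟨t, fun x y => ?_⟩
  have := (abs_le.1 (abs_lazyKer_torus_sub_le hd t x y)).1
  linarith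

theorem summable_avoidProb_torus (hd : d ≠ 0) {B : Set (Torus d N)} (hB : Bᶜ.Nonempty)
    (x : Torus d N) : Summable fun m => avoidProb B m x := by
  obtain ⟨z, hz⟩ := hB
  obtain ⟨t, ht⟩ := exists_lazyKer_torus_ge (N := N) hd
  have hn : (0 : ℝ) < (N : ℝ) ^ d := by
    have : (0 : ℝ) < N := by exact_mod_cast NeZero.pos N
    positivity
  refine summable_of_sum_range_le (c := t * ((N : ℝ) ^ d) ^ 2)
    (fun m => avoidProb_nonneg B m x) fun M => ?_
  set S : Torus d N → ℝ := fun y => ∑ m ∈ Finset.range M, avoidProb B m y with hS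
  have hS0 : ∀ y, 0 ≤ S y := fun y => Finset.sum_nonneg fun m _ => avoidProb_nonneg B m y
  have hSz : ∀ y, y ∉ B → S y = 0 := fun y hy =>
    Finset.sum_eq_zero fun m _ => avoidProb_of_notMem B m hy
  set ρ : Torus d N → ℝ := fun y => if y ∈ B then 0 else srwAvg d _ S y with hρ
  have hρ0 : ∀ y, 0 ≤ ρ y := fun y => by
    simp only [hρ]; split_ifs
    · exact le_rfl
    · exact srwAvg_nonneg hS0 y
  have hsub : ∀ y, -ρ y ≤ (S - srwAvg d _ S) y ∧ (S - srwAvg d _ S) y ≤ 1 - ρ y := fun y => by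
    simp only [hρ, Pi.sub_apply]
    by_cases hy : y ∈ B
    · have h1 := sub_srwAvg_sum_avoidProb B M hy
      have h2 := avoidProb_nonneg B M y
      have h3 : avoidProb B M y ≤ 1 := by
        rw [avoidProb, Set.indicator_of_mem hy]
        exact stayProb_le_one B hd M y
      rw [if_pos hy, h1]
      constructor <;> linarith
    · rw [if_neg hy, hSz y hy]
      constructor <;> linarith
  have hρn : ∑ y, ρ y ≤ (N : ℝ) ^ d := by
    have h1 : ∑ y, (S - srwAvg d _ S) y = 0 := by
      simp only [Pi.sub_apply, Finset.sum_sub_distrib, sum_srwAvg hd, sub_self]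
    have h2 : ∑ y, (S - srwAvg d _ S) y ≤ ∑ y : Torus d N, (1 - ρ y) :=
      Finset.sum_le_sum fun y _ => (hsub y).2
    rw [Finset.sum_sub_distrib, Finset.sum_const, Finset.card_univ, nsmul_one, card_torus] at h2
    linarith
  have hQ : (lazyAvg d _ ^ t) S z ≤ t * (N : ℝ) ^ d / 2 := by
    have h1 := sum_lazyAvg_pow_sub t S z
    rw [hSz z hz] at h1
    have h2 : ∀ s ∈ Finset.range t,
        -(N : ℝ) ^ d ≤ (lazyAvg d _ ^ s) (S - srwAvg d _ S) z := fun s _ => by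
      refine le_trans ?_ (lazyAvg_pow_mono s (fun y => (hsub y).1) z)
      have h3 : (fun y => -ρ y) = -ρ := rfl
      rw [h3, map_neg, Pi.neg_apply, neg_le_neg_iff,
        lazyAvg_pow_eq_sum s Finset.univ (fun y hy => absurd (Finset.mem_univ y) hy)]
      refine le_trans (Finset.sum_le_sum fun y _ => ?_) hρn
      exact mul_le_of_le_one_right (hρ0 y) (lazyKer_le_one hd s z y)
    have h3 := Finset.sum_le_sum h2
    rw [h1] at h3
    simp only [Finset.sum_const, Finset.card_range, nsmul_eq_mul] at h3
    linarith
  rw [lazyAvg_pow_eq_sum t Finset.univ (fun y hy => absurd (Finset.mem_univ y) hy)] at hQ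
  have h4 : S x * (((N : ℝ) ^ d)⁻¹ / 2) ≤ t * (N : ℝ) ^ d / 2 := by
    refine le_trans ?_ hQ
    refine le_trans (mul_le_mul_of_nonneg_left (ht z x) (hS0 x)) ?_
    exact Finset.single_le_sum (f := fun y => S y * lazyKer t z y)
      (fun y _ => mul_nonneg (hS0 y) (lazyKer_nonneg t z y)) (Finset.mem_univ x)
  have h5 := mul_le_mul_of_nonneg_right h4 (by positivity : 0 ≤ 2 * (N : ℝ) ^ d)
  have h6 : S x * (((N : ℝ) ^ d)⁻¹ / 2) * (2 * (N : ℝ) ^ d) = S x := by field_simp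
  rw [h6] at h5
  linarith

theorem meanExit_eq (hd : d ≠ 0) {B : Set (Torus d N)} (hB : Bᶜ.Nonempty) {x : Torus d N}
    (hx : x ∈ B) : meanExit B x = 1 + srwAvg d _ (meanExit B) x := by
  have hs := summable_avoidProb_torus hd hB
  rw [meanExit, (hs x).tsum_eq_zero_add, avoidProb_zero_of_mem B hx]
  congr 1
  simp only [avoidProb_succ_of_mem B _ hx]
  refine HasSum.tsum_eq ?_
  refine (hasSum_iff_tendsto_nat_of_nonneg
    (fun m => srwAvg_nonneg (avoidProb_nonneg B m) x) _).2 ?_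
  simp only [← srwAvg_sum]
  exact tendsto_srwAvg (fun y => (hs y).hasSum.tendsto_sum_nat) x

theorem one_le_meanExit (hd : d ≠ 0) {B : Set (Torus d N)} (hB : Bᶜ.Nonempty) {x : Torus d N}
    (hx : x ∈ B) : 1 ≤ meanExit B x := by
  rw [meanExit_eq hd hB hx]
  linarith [srwAvg_nonneg (meanExit_nonneg B) x]

/-- The expected exit time of `B` for the walk started from the uniform distribution. -/
def unifMeanExit (B : Set (Torus d N)) : ℝ := ((N : ℝ) ^ d)⁻¹ * ∑ x, meanExit B x

theorem unifMeanExit_nonneg (B : Set (Torus d N)) : 0 ≤ unifMeanExit B :=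
  mul_nonneg (by positivity) (Finset.sum_nonneg fun x _ => meanExit_nonneg B x)

theorem abs_lazyAvg_pow_meanExit_sub_le (hd : d ≠ 0) (B : Set (Torus d N)) (t : ℕ)
    (x : Torus d N) :
    |(lazyAvg d _ ^ t) (meanExit B) x - unifMeanExit B| ≤
      Real.exp (-(4 * t / (d * (N : ℝ) ^ 2))) * ((N : ℝ) ^ d * unifMeanExit B) := by
  have hN : (0 : ℝ) < N := by exact_mod_cast NeZero.pos N
  have h1 : (N : ℝ) ^ d * unifMeanExit B = ∑ x, meanExit B x := by
    rw [unifMeanExit]; field_simp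
  rw [lazyAvg_pow_eq_sum t Finset.univ (fun y hy => absurd (Finset.mem_univ y) hy), h1,
    unifMeanExit, Finset.mul_sum, Finset.mul_sum, ← Finset.sum_sub_distrib]
  refine (Finset.abs_sum_le_sum_abs _ _).trans (Finset.sum_le_sum fun y _ => ?_)
  rw [mul_comm _ (meanExit B y), ← mul_sub, abs_mul, abs_of_nonneg (meanExit_nonneg B y), mul_comm]
  exact mul_le_mul_of_nonneg_right (abs_lazyKer_torus_sub_le hd t x y) (meanExit_nonneg B y)

theorem torusCharge_of_mem (hd : d ≠ 0) {B : Set (Torus d N)} (hB : Bᶜ.Nonempty) {y : Torus d N}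
    (hy : y ∈ B) : torusCharge B y = 0 := by
  rw [torusCharge, meanExit_eq hd hB hy]
  ring

theorem sum_torusCharge (hd : d ≠ 0) (B : Set (Torus d N)) :
    ∑ y, torusCharge B y = (N : ℝ) ^ d := by
  simp only [torusCharge, Finset.sum_sub_distrib, sum_srwAvg hd, sub_self, sub_zero]
  rw [Finset.sum_const, Finset.card_univ, nsmul_one, card_torus]

theorem lazyAvg_pow_meanExit (hd : d ≠ 0) (V : Finset (Torus d N)) (hV : V.Nonempty) (t : ℕ)
    {x : Torus d N} (hx : x ∈ V) :
    (lazyAvg d _ ^ t) (meanExit (V : Set (Torus d N))ᶜ) x =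
      (∑ y ∈ V, torusCharge (V : Set (Torus d N))ᶜ y * ∑ s ∈ Finset.range t, lazyKer s x y - t) /
        2 := by
  set B := (V : Set (Torus d N))ᶜ with hB
  have hB' : Bᶜ.Nonempty := by simpa [hB] using hV
  have hxB : x ∉ B := by simpa [hB] using hx
  have h1 := sum_lazyAvg_pow_sub t (meanExit B) x
  rw [meanExit_of_notMem B hxB] at h1
  have h2 : meanExit B - srwAvg d _ (meanExit B) = (fun _ => 1) - torusCharge B := by
    ext y; simp [torusCharge]
  have h3 : ∀ s, (lazyAvg d _ ^ s) (meanExit B - srwAvg d _ (meanExit B)) x =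
      1 - ∑ y ∈ V, torusCharge B y * lazyKer s x y := fun s => by
    rw [h2, map_sub, Pi.sub_apply, lazyAvg_pow_const hd, lazyAvg_pow_eq_sum s V fun y hy =>
      torusCharge_of_mem hd hB' (by simpa [hB] using hy)]
  simp only [h3, Finset.sum_sub_distrib, Finset.sum_const, Finset.card_range, nsmul_eq_mul,
    mul_one] at h1
  rw [Finset.sum_comm] at h1
  simp only [Finset.mul_sum]
  linarith

/-- Quantitative comparison between the mean entrance time of a set on the torus and the
capacity of its lift to the lattice. -/
theorem abs_unifMeanExit_mul_latCap_sub_le (hd : 3 ≤ d) (V : Finset (Torus d N)) (hV : V.Nonempty)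
    (φ : Torus d N → Lat d) (hφ : ∀ x, latToTorus d N (φ x) = x) (t : ℕ) {T D : ℝ}
    (hT : ∀ x y : Lat d, ∑' s, lazyKer (s + t) x y ≤ T)
    (hD : ∀ x ∈ V, ∀ y ∈ V,
      ∑ s ∈ Finset.range t, (lazyKer s x y - lazyKer s (φ x) (φ y)) ≤ D) :
    |unifMeanExit (V : Set (Torus d N))ᶜ * latCap (V.image φ) / (N : ℝ) ^ d - 1| ≤
      unifMeanExit (V : Set (Torus d N))ᶜ * latCap (V.image φ) / (N : ℝ) ^ d *
          ((N : ℝ) ^ d * Real.exp (-(4 * t / (d * (N : ℝ) ^ 2)))) +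
        latCap (V.image φ) / 2 * (T + D + t / (N : ℝ) ^ d) := by
  have hd0 : d ≠ 0 := by omega
  have hn : (0 : ℝ) < (N : ℝ) ^ d := by
    have : (0 : ℝ) < N := by exact_mod_cast NeZero.pos N
    positivity
  set n : ℝ := (N : ℝ) ^ d
  set B := (V : Set (Torus d N))ᶜ with hB
  set W := V.image φ with hW
  set e : Torus d N → ℝ := fun x => escProb (W : Set (Lat d))ᶜ (φ x) with he
  have he0 : ∀ x, 0 ≤ e x := fun x => escProb_nonneg _ _
  have hinj : Function.Injective φ := fun x y h => by rw [← hφ x, h, hφ y]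
  have hsumW : ∀ f : Lat d → ℝ, ∑ y ∈ W, f y = ∑ x ∈ V, f (φ x) := fun f =>
    Finset.sum_image fun x _ y _ h => hinj h
  have hcap : latCap W = ∑ x ∈ V, e x := hsumW _
  have hcap0 : 0 ≤ latCap W := latCap_nonneg W
  have hK := summable_lazyKer_lat (d := d) hd
  have hA : ∀ y ∈ V, |∑ x ∈ V, e x * ∑ s ∈ Finset.range t, lazyKer s x y - 2| ≤
      latCap W * (T + D) := by
    intro y hy
    have h1 := hasSum_lazyKer_escProb hd0 W hK (x := φ y) (Finset.mem_image_of_mem φ hy)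
    have h2 := h1.summable.sum_add_tsum_nat_add t
    rw [h1.tsum_eq] at h2
    simp only [hsumW, lazyKer_comm _ (φ y) _] at h2
    rw [Finset.sum_comm, Summable.tsum_finsetSum (fun x _ =>
      ((summable_nat_add_iff t).2 (hK (φ x) (φ y))).mul_left _)] at h2
    simp only [tsum_mul_left, ← Finset.mul_sum] at h2
    have h3 : ∑ x ∈ V, e x * ∑ s ∈ Finset.range t, lazyKer s x y - 2 =
        ∑ x ∈ V, e x * (∑ s ∈ Finset.range t, (lazyKer s x y - lazyKer s (φ x) (φ y)) -
          ∑' s, lazyKer (s + t) (φ x) (φ y)) := by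
      rw [← h2]
      simp only [mul_sub, Finset.sum_sub_distrib, he]
      ring
    rw [h3, hcap, Finset.sum_mul]
    refine (Finset.abs_sum_le_sum_abs _ _).trans (Finset.sum_le_sum fun x hx => ?_)
    rw [abs_mul, abs_of_nonneg (he0 x)]
    refine mul_le_mul_of_nonneg_left ?_ (he0 x)
    have h4 : 0 ≤ ∑ s ∈ Finset.range t, (lazyKer s x y - lazyKer s (φ x) (φ y)) := by
      refine Finset.sum_nonneg fun s _ => sub_nonneg.2 ?_
      rw [lazyKer_sub s x y, lazyKer_sub s (φ x) (φ y)]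
      have := lazyKer_lat_le_torus N s (φ x - φ y)
      rwa [latToTorus_sub, hφ, hφ] at this
    have h5 : 0 ≤ ∑' s, lazyKer (s + t) (φ x) (φ y) := tsum_nonneg fun s => lazyKer_nonneg _ _ _
    have h6 := hT (φ x) (φ y)
    have h7 := hD x hx y hy
    rw [abs_le]
    constructor <;> linarith
  have hρ0 : ∀ y ∈ V, 0 ≤ torusCharge B y := fun y hy =>
    torusCharge_of_notMem (by simpa [hB] using hy)
  have hρ : ∑ y ∈ V, torusCharge B y = n := by
    refine (Finset.sum_subset (Finset.subset_univ V) fun y _ hy => ?_).trans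
      (sum_torusCharge hd0 B)
    exact torusCharge_of_mem hd0 (by simpa [hB] using hV) (by simpa [hB] using hy)
  have hG : ∑ x ∈ V, e x * (lazyAvg d _ ^ t) (meanExit B) x =
      (∑ y ∈ V, torusCharge B y * ∑ x ∈ V, e x * ∑ s ∈ Finset.range t, lazyKer s x y -
        t * latCap W) / 2 := by
    rw [Finset.sum_congr rfl fun x hx => by rw [lazyAvg_pow_meanExit hd0 V hV t hx]]
    rw [hcap]
    simp only [Finset.mul_sum, mul_div_assoc', ← Finset.sum_div, mul_sub, Finset.sum_sub_distrib]
    rw [Finset.sum_comm]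
    congr 2
    · refine Finset.sum_congr rfl fun y _ => Finset.sum_congr rfl fun x _ =>
        Finset.sum_congr rfl fun s _ => by ring
    · exact Finset.sum_congr rfl fun x _ => by ring
  have h1 : |∑ y ∈ V, torusCharge B y * ∑ x ∈ V, e x * ∑ s ∈ Finset.range t, lazyKer s x y -
      2 * n| ≤ n * (latCap W * (T + D)) := by
    rw [← hρ, Finset.mul_sum, Finset.sum_mul, ← Finset.sum_sub_distrib]
    refine (Finset.abs_sum_le_sum_abs _ _).trans (Finset.sum_le_sum fun y hy => ?_)
    rw [mul_comm 2, ← mul_sub, abs_mul, abs_of_nonneg (hρ0 y hy)]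
    exact mul_le_mul_of_nonneg_left (hA y hy) (hρ0 y hy)
  set H := unifMeanExit B with hH
  have h2 : |∑ x ∈ V, e x * (lazyAvg d _ ^ t) (meanExit B) x - latCap W * H| ≤
      latCap W * (Real.exp (-(4 * t / (d * (N : ℝ) ^ 2))) * (n * H)) := by
    rw [hcap, Finset.sum_mul, Finset.sum_mul, ← Finset.sum_sub_distrib]
    refine (Finset.abs_sum_le_sum_abs _ _).trans (Finset.sum_le_sum fun x _ => ?_)
    rw [← mul_sub, abs_mul, abs_of_nonneg (he0 x)]
    exact mul_le_mul_of_nonneg_left (abs_lazyAvg_pow_meanExit_sub_le hd0 B t x) (he0 x)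
  rw [hG] at h2
  set G := ∑ y ∈ V, torusCharge B y * ∑ x ∈ V, e x * ∑ s ∈ Finset.range t, lazyKer s x y
  set E := Real.exp (-(4 * t / (d * (N : ℝ) ^ 2)))
  have h3 : |H * latCap W - n| ≤
      latCap W * (E * (n * H)) + n * (latCap W * (T + D)) / 2 + t * latCap W / 2 := by
    have h4 : 0 ≤ t * latCap W := by positivity
    rw [abs_le] at h1 h2 ⊢
    constructor <;> linarith [h1.1, h1.2, h2.1, h2.2]
  have h4 : H * latCap W / n - 1 = (H * latCap W - n) / n := by field_simp
  rw [h4, abs_div, abs_of_pos hn, div_le_iff₀ hn]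
  refine h3.trans_eq ?_
  field_simp
  ring

end TorusPotential

section Parameters

variable {d N : ℕ}

theorem latToTorus_torusToLat [NeZero N] (x : Torus d N) : latToTorus d N (torusToLat x) = x := by
  ext i
  simp only [latToTorus, torusToLat, Function.comp]
  split_ifs <;> simp

theorem abs_torusToLat_le [NeZero N] (x : Torus d N) (i : Fin d) :
    |torusToLat x i| ≤ torusDist 0 x := by
  have h1 : min (0 - x i).val (x i - 0).val ≤ torusDist 0 x :=
    Finset.le_sup (f := fun i : Fin d => min ((0 : Torus d N) i - x i).val (x i - (0 : Torus d N) i).val)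
      (Finset.mem_univ i)
  refine le_trans ?_ (Nat.cast_le.2 h1)
  have hlt := ZMod.val_lt (x i)
  have h3 : ((x i).val : ℝ) ≤ (N : ℝ) / 2 ↔ 2 * (x i).val ≤ N := by
    rw [le_div_iff₀ two_pos, mul_comm]
    exact_mod_cast Iff.rfl
  rw [zero_sub, sub_zero, ZMod.neg_val, torusToLat, if_congr h3 rfl rfl]
  by_cases h0 : x i = 0
  · simp [h0]
  · rw [if_neg h0]
    split_ifs with h
    · rw [abs_of_nonneg (by positivity)]
      omega
    · rw [abs_of_nonpos (by omega)]
      omega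

theorem exists_exp_neg_rpow_le {b δ : ℝ} (hb : 0 < b) (hδ : 0 < δ) (p : ℝ) :
    ∃ C : ℝ, 0 < C ∧ ∀ x : ℝ, 1 ≤ x → Real.exp (-(b * x ^ δ)) ≤ C * x ^ (-p) := by
  obtain ⟨k, hk⟩ := exists_nat_ge (p / δ)
  refine ⟨k.factorial / b ^ k, by positivity, fun x hx => ?_⟩
  have hx0 : 0 < x := by linarith
  have h1 := Real.pow_div_factorial_le_exp (b * x ^ δ) (by positivity) k
  have h2 : x ^ p ≤ (x ^ δ) ^ k := by
    rw [← Real.rpow_natCast (x ^ δ) k, ← Real.rpow_mul hx0.le]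
    refine Real.rpow_le_rpow_of_exponent_le hx ?_
    rw [div_le_iff₀ hδ] at hk
    linarith
  have h3 : b ^ k * x ^ p / k.factorial ≤ Real.exp (b * x ^ δ) := by
    refine le_trans ?_ h1
    rw [mul_pow]
    gcongr
  rw [Real.exp_neg, Real.rpow_neg hx0.le]
  refine (inv_anti₀ (by positivity) h3).trans_eq ?_
  rw [inv_div, mul_comm, ← div_eq_mul_inv, div_div]
  ring

theorem exists_lazyKer_fibre_le (hd : d ≠ 0) {δ : ℝ} (hδ : 0 < δ) :
    ∃ C : ℝ, 0 < C ∧ ∀ N : ℕ, ∀ [NeZero N], ∀ s : ℕ, ∀ x : Lat d, (∀ i, |x i| * 2 ≤ N) →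
      lazyKer s (latToTorus d N x) 0 - lazyKer s x 0 ≤ C * (N : ℝ) ^ (-(d : ℝ) + δ * d / 2) := by
  have hd' : (0 : ℝ) < d := by exact_mod_cast Nat.pos_of_ne_zero hd
  obtain ⟨C, hC, h⟩ := exists_exp_neg_rpow_le (show (0 : ℝ) < 1 / 2 by norm_num) (half_pos hδ) d
  refine ⟨2 * d * Real.exp (1 / 2) * C + (12 * d) ^ d, by positivity, fun N _ s x hx => ?_⟩
  have hN1 : (1 : ℝ) ≤ N := by exact_mod_cast NeZero.pos N
  have hN0 : (0 : ℝ) < N := by linarith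
  have hpos : (0 : ℝ) < (N : ℝ) ^ (-(d : ℝ) + δ * d / 2) := Real.rpow_pos_of_pos hN0 _
  rw [add_mul]
  rcases lt_or_ge (s : ℝ) ((N : ℝ) ^ (2 - δ)) with hs | hs
  · rw [lazyKer_latToTorus, add_sub_cancel_left]
    set a : ℝ := (N : ℝ) ^ (-1 + δ / 2) with ha
    have h1 := lazyAvg_pow_fibre_le hd (a := a) (by positivity) s x hx
    have h2 : a ^ 2 * (N : ℝ) ^ (2 - δ) = 1 := by
      rw [ha, ← Real.rpow_natCast, ← Real.rpow_mul hN0.le, ← Real.rpow_add hN0]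
      convert Real.rpow_zero (N : ℝ) using 2
      push_cast
      ring
    have h3 : a * N = (N : ℝ) ^ (δ / 2) := by
      rw [ha]
      nth_rewrite 2 [← Real.rpow_one (N : ℝ)]
      rw [← Real.rpow_add hN0]
      congr 1
      ring
    have h4 : s * a ^ 2 ≤ 1 := by
      rw [← h2, mul_comm]
      exact mul_le_mul_of_nonneg_left hs.le (by positivity)
    have h5 : Real.exp (s * a ^ 2 / 2 - a * N / 2) ≤ Real.exp (1 / 2) * (C * (N : ℝ) ^ (-(d : ℝ))) := by
      refine le_trans ?_ (mul_le_mul_of_nonneg_left (h N hN1) (Real.exp_pos _).le)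
      rw [← Real.exp_add, Real.exp_le_exp, h3]
      linarith
    have h6 : (N : ℝ) ^ (-(d : ℝ)) ≤ (N : ℝ) ^ (-(d : ℝ) + δ * d / 2) :=
      Real.rpow_le_rpow_of_exponent_le hN1 (by have := mul_pos hδ hd'; linarith)
    calc _ ≤ 2 * d * (Real.exp (1 / 2) * (C * (N : ℝ) ^ (-(d : ℝ)))) :=
          h1.trans (mul_le_mul_of_nonneg_left h5 (by positivity))
      _ ≤ 2 * d * (Real.exp (1 / 2) * (C * (N : ℝ) ^ (-(d : ℝ) + δ * d / 2))) := by gcongr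
      _ ≤ _ := by
          have : 0 ≤ (12 * d : ℝ) ^ d * (N : ℝ) ^ (-(d : ℝ) + δ * d / 2) := by positivity
          linarith
  · have hs0 : (0 : ℝ) < s := lt_of_lt_of_le (by positivity) hs
    have h1 := lazyKer_torus_le (N := N) hd (t := s) (by exact_mod_cast hs0.ne') (latToTorus d N x) 0
    set b : ℝ := (N : ℝ) ^ (-1 + δ / 2) with hb
    have h2 : 1 / (N : ℝ) ≤ b := by
      rw [one_div, ← Real.rpow_neg_one]
      exact Real.rpow_le_rpow_of_exponent_le hN1 (by linarith)
    have h3 : 1 / √(s : ℝ) ≤ b := by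
      have : (N : ℝ) ^ (1 - δ / 2) ≤ √(s : ℝ) := by
        refine Real.le_sqrt_of_sq_le (le_trans (le_of_eq ?_) hs)
        rw [← Real.rpow_natCast, ← Real.rpow_mul hN0.le]
        congr 1
        push_cast
        ring
      rw [one_div]
      refine (inv_anti₀ (by positivity) this).trans_eq ?_
      rw [hb, ← Real.rpow_neg hN0.le]
      congr 1
      ring
    have h4 : (6 * d * (1 / N + 1 / √(s : ℝ))) ^ d ≤ (6 * d * (b + b)) ^ d := by gcongr
    have h5 : (6 * d * (b + b)) ^ d = (12 * d) ^ d * (N : ℝ) ^ (-(d : ℝ) + δ * d / 2) := by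
      rw [show 6 * d * (b + b) = 12 * d * b by ring, mul_pow, hb, ← Real.rpow_natCast (_ ^ _) d,
        ← Real.rpow_mul hN0.le]
      congr 2
      ring
    have h6 := lazyKer_nonneg s x 0
    have h7 : 0 ≤ 2 * d * Real.exp (1 / 2) * C * (N : ℝ) ^ (-(d : ℝ) + δ * d / 2) := by positivity
    linarith

theorem abs_inv_sub_one_le {X a : ℝ} (ha0 : 0 ≤ a) (ha : a ≤ 1 / 4)
    (h : |X - 1| ≤ X * a + a) : |X⁻¹ - 1| ≤ 3 * a := by
  have hX : 3 / 5 ≤ X := by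
    have := (abs_le.1 h).1
    by_contra! hX
    rcases le_or_gt (-1) X with h0 | h0 <;> nlinarith
  have hX0 : 0 < X := by linarith
  have : X⁻¹ - 1 = -(X - 1) / X := by field_simp; ring
  rw [this, abs_div, abs_neg, abs_of_pos hX0, div_le_iff₀ hX0]
  nlinarith

theorem unifMeanExit_eq_zero_or_ge [NeZero N] (hd : d ≠ 0) (V : Finset (Torus d N))
    (hV : V.Nonempty) :
    unifMeanExit (V : Set (Torus d N))ᶜ = 0 ∨
      ((N : ℝ) ^ d)⁻¹ ≤ unifMeanExit (V : Set (Torus d N))ᶜ := by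
  by_cases h : ∃ x, x ∉ V
  · obtain ⟨x, hx⟩ := h
    right
    refine le_mul_of_one_le_right (by positivity) ?_
    refine (one_le_meanExit hd (B := (V : Set (Torus d N))ᶜ) (by simpa using hV)
      (x := x) (by simpa using hx)).trans ?_
    exact Finset.single_le_sum (f := fun y => meanExit (V : Set (Torus d N))ᶜ y)
      (fun y _ => meanExit_nonneg _ y) (Finset.mem_univ x)
  · push Not at h
    left
    rw [unifMeanExit, Finset.sum_eq_zero fun x _ => meanExit_of_notMem _ (by simpa using h x),
      mul_zero]

theorem exists_abs_unifMeanExit_mul_latCap_sub_le (hd : 3 ≤ d) {ε : ℝ} (hε : 0 < ε) (hε1 : ε < 1) :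
    ∃ C : ℝ, 0 < C ∧ ∀ N : ℕ, ∀ [NeZero N], 4 ≤ (N : ℝ) ^ ε → ∀ rN : ℝ, 1 ≤ rN →
      rN ≤ (N : ℝ) ^ (1 - ε) → ∀ V : Finset (Torus d N), V.Nonempty →
      (V : Set (Torus d N)) ⊆ torusBall 0 rN →
      |unifMeanExit (V : Set (Torus d N))ᶜ * latCap (V.image torusToLat) / (N : ℝ) ^ d - 1| ≤
        unifMeanExit (V : Set (Torus d N))ᶜ * latCap (V.image torusToLat) / (N : ℝ) ^ d *
          (C * (N : ℝ) ^ (-(ε / 2))) + C * (N : ℝ) ^ (-(ε / 2)) := by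
  have hd3 : (3 : ℝ) ≤ d := by exact_mod_cast hd
  have hd0 : d ≠ 0 := by omega
  set δ : ℝ := ε / (d + 2) with hδ
  have hδ0 : 0 < δ := by positivity
  have hδε : δ * (d + 2) = ε := by rw [hδ]; field_simp
  obtain ⟨C1, hC1, h1⟩ := exists_tsum_lazyKer_lat_le hd (η := ε / 4) (by linarith) (by linarith)
  obtain ⟨C2, hC2, h2⟩ := exists_lazyKer_fibre_le hd0 hδ0
  obtain ⟨C3, hC3, h3⟩ := exists_exp_neg_rpow_le (show (0 : ℝ) < 4 / d by positivity) hδ0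
    (d + ε / 2)
  set C4 : ℝ := 4 * 5 ^ d / 2 * (C1 + 2 * C2 + 2) with hC4
  refine ⟨C3 + C4, by positivity, fun N _ hN4 rN hr1 hrN V hV hVr => ?_⟩
  have hN1 : (1 : ℝ) ≤ N := by exact_mod_cast NeZero.pos N
  have hN0 : (0 : ℝ) < N := by linarith
  set q : ℝ := (N : ℝ) ^ (-(d - 2 : ℝ) + ε / 2) with hq
  have hq0 : 0 < q := Real.rpow_pos_of_pos hN0 _
  set t : ℕ := ⌈(N : ℝ) ^ (2 + δ)⌉₊ with ht
  have ht1 : (N : ℝ) ^ (2 + δ) ≤ t := Nat.le_ceil _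
  have hNδ : 1 ≤ (N : ℝ) ^ (2 + δ) := Real.one_le_rpow hN1 (by linarith)
  have ht2 : (t : ℝ) ≤ 2 * (N : ℝ) ^ (2 + δ) := by
    have := Nat.ceil_lt_add_one (show 0 ≤ (N : ℝ) ^ (2 + δ) by positivity)
    linarith
  have htpos : 1 ≤ t := by
    have : (1 : ℝ) ≤ t := hNδ.trans ht1
    exact_mod_cast this
  have hφ : ∀ x ∈ V, ∀ i, (|torusToLat x i| : ℝ) ≤ rN := fun x hx i => by
    refine le_trans ?_ (hVr hx : (torusDist 0 x : ℝ) ≤ rN)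
    exact_mod_cast abs_torusToLat_le x i
  have hrN4 : rN * 4 ≤ N := by
    calc rN * 4 ≤ (N : ℝ) ^ (1 - ε) * (N : ℝ) ^ ε := by gcongr
      _ = N := by rw [← Real.rpow_add hN0, sub_add_cancel, Real.rpow_one]
  have hφφ : ∀ x ∈ V, ∀ y ∈ V, ∀ i, |(torusToLat x - torusToLat y) i| * 2 ≤ (N : ℤ) := by
    intro x hx y hy i
    have h : (|(torusToLat x i : ℝ) - torusToLat y i|) * 2 ≤ N := by
      have := abs_sub (torusToLat x i : ℝ) (torusToLat y i)
      linarith [hφ x hx i, hφ y hy i]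
    exact_mod_cast h
  have hT : ∀ x y : Lat d, ∑' s, lazyKer (s + t) x y ≤ C1 * q := fun x y => by
    refine (h1 t htpos x y).trans (mul_le_mul_of_nonneg_left ?_ hC1.le)
    refine (Real.rpow_le_rpow_of_nonpos (by positivity) ht1 (by linarith)).trans ?_
    rw [← Real.rpow_mul hN0.le]
    exact Real.rpow_le_rpow_of_exponent_le hN1 (by nlinarith)
  have hN2 : (t : ℝ) * (N : ℝ) ^ (-(d : ℝ) + δ * d / 2) ≤ 2 * q := by
    refine (mul_le_mul_of_nonneg_right ht2 (by positivity)).trans_eq ?_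
    rw [mul_assoc, ← Real.rpow_add hN0]
    congr 2
    linarith
  have hD : ∀ x ∈ V, ∀ y ∈ V, ∑ s ∈ Finset.range t,
      (lazyKer s x y - lazyKer s (torusToLat x) (torusToLat y)) ≤ 2 * C2 * q := fun x hx y hy => by
    have h : ∀ s ∈ Finset.range t, lazyKer s x y - lazyKer s (torusToLat x) (torusToLat y) ≤
        C2 * (N : ℝ) ^ (-(d : ℝ) + δ * d / 2) := fun s _ => by
      have := h2 N s _ (hφφ x hx y hy)
      rwa [latToTorus_sub, latToTorus_torusToLat, latToTorus_torusToLat, ← lazyKer_sub,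
        ← lazyKer_sub] at this
    refine (Finset.sum_le_sum h).trans ?_
    rw [Finset.sum_const, Finset.card_range, nsmul_eq_mul]
    nlinarith
  have htn : t / (N : ℝ) ^ d ≤ 2 * q := by
    refine le_trans ?_ hN2
    rw [div_eq_mul_inv, ← Real.rpow_natCast, ← Real.rpow_neg hN0.le]
    refine mul_le_mul_of_nonneg_left ?_ (by positivity)
    exact Real.rpow_le_rpow_of_exponent_le hN1 (by nlinarith)
  have hcap : latCap (V.image torusToLat) ≤ 4 * 5 ^ d * (N : ℝ) ^ ((1 - ε) * (d - 2 : ℝ)) := by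
    refine (latCap_le hd (r := ⌊rN⌋₊) (Nat.le_floor (by exact_mod_cast hr1)) _ ?_).trans ?_
    · intro y hy i
      obtain ⟨x, hx, rfl⟩ := Finset.mem_image.1 hy
      have h : (torusToLat x i).natAbs ≤ ⌊rN⌋₊ := by
        refine Nat.le_floor ?_
        rw [Nat.cast_natAbs]
        exact_mod_cast hφ x hx i
      rw [Int.abs_eq_natAbs]
      exact_mod_cast h
    · refine mul_le_mul_of_nonneg_left ?_ (by positivity)
      rw [Real.rpow_mul hN0.le, show (d - 2 : ℝ) = ((d - 2 : ℕ) : ℝ) by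
        rw [Nat.cast_sub (by omega)]; norm_num, Real.rpow_natCast]
      exact pow_le_pow_left₀ (by positivity) ((Nat.floor_le (by linarith)).trans hrN) _
  have hβ : latCap (V.image torusToLat) / 2 * (C1 * q + 2 * C2 * q + t / (N : ℝ) ^ d) ≤
      C4 * (N : ℝ) ^ (-(ε / 2)) := by
    calc _ ≤ 4 * 5 ^ d * (N : ℝ) ^ ((1 - ε) * (d - 2 : ℝ)) / 2 *
          (C1 * q + 2 * C2 * q + 2 * q) := by
          have := latCap_nonneg (V.image torusToLat)
          gcongr
      _ = C4 * ((N : ℝ) ^ ((1 - ε) * (d - 2 : ℝ)) * q) := by rw [hC4]; ring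
      _ ≤ _ := by
          refine mul_le_mul_of_nonneg_left ?_ (by positivity)
          rw [hq, ← Real.rpow_add hN0]
          exact Real.rpow_le_rpow_of_exponent_le hN1 (by nlinarith)
  have hα : (N : ℝ) ^ d * Real.exp (-(4 * t / (d * (N : ℝ) ^ 2))) ≤ C3 * (N : ℝ) ^ (-(ε / 2)) := by
    have h : Real.exp (-(4 * t / (d * (N : ℝ) ^ 2))) ≤ C3 * (N : ℝ) ^ (-(d + ε / 2)) := by
      refine le_trans (Real.exp_le_exp.2 (neg_le_neg ?_)) (h3 N hN1)
      have h5 : (N : ℝ) ^ δ * (N : ℝ) ^ 2 ≤ t := by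
        refine le_trans (le_of_eq ?_) ht1
        rw [add_comm, Real.rpow_add hN0]
        norm_num
      rw [div_mul_eq_mul_div, div_le_div_iff₀ (by positivity) (by positivity)]
      have : 0 < (d : ℝ) := by positivity
      nlinarith
    refine (mul_le_mul_of_nonneg_left h (by positivity)).trans_eq ?_
    rw [mul_left_comm, ← Real.rpow_natCast, ← Real.rpow_add hN0]
    congr 2
    ring
  have hmain := abs_unifMeanExit_mul_latCap_sub_le hd V hV torusToLat latToTorus_torusToLat t hT hD
  refine hmain.trans ?_
  have hX : 0 ≤ unifMeanExit (V : Set (Torus d N))ᶜ * latCap (V.image torusToLat) / (N : ℝ) ^ d :=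
    div_nonneg (mul_nonneg (unifMeanExit_nonneg _) (latCap_nonneg _)) (by positivity)
  have hp : 0 < (N : ℝ) ^ (-(ε / 2)) := Real.rpow_pos_of_pos hN0 _
  refine add_le_add (mul_le_mul_of_nonneg_left (hα.trans ?_) hX) (hβ.trans ?_)
  · have : 0 ≤ C4 := by positivity
    gcongr; linarith
  · gcongr; linarith

theorem exists_abs_div_unifMeanExit_mul_latCap_sub_le (hd : 3 ≤ d) {ε : ℝ} (hε : 0 < ε)
    (hε1 : ε < 1) :
    ∃ c c' : ℝ, 0 < c ∧ 0 < c' ∧ ∀ N : ℕ, ∀ [NeZero N], ∀ rN : ℝ, 1 ≤ rN →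
      rN ≤ (N : ℝ) ^ (1 - ε) → ∀ V : Finset (Torus d N), V.Nonempty →
      (V : Set (Torus d N)) ⊆ torusBall 0 rN →
      |(N : ℝ) ^ d / (unifMeanExit (V : Set (Torus d N))ᶜ * latCap (V.image torusToLat)) - 1| ≤
        c * (N : ℝ) ^ (-c') := by
  have hd0 : d ≠ 0 := by omega
  obtain ⟨C, hC, h⟩ := exists_abs_unifMeanExit_mul_latCap_sub_le hd hε hε1
  obtain ⟨c0, hc0, hcap⟩ := exists_le_latCap hd
  set κ : ℝ := min (1 / (4 * C)) (1 / 2) with hκ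
  have hκ0 : 0 < κ := by positivity
  set M : ℝ := 1 + (κ⁻¹) ^ (4 * d / ε) / c0 with hM
  have hM0 : 0 < M := by positivity
  refine ⟨3 * C + M / κ, ε / 2, by positivity, by positivity, fun N _ rN hr1 hrN V hV hVr => ?_⟩
  have hN1 : (1 : ℝ) ≤ N := by exact_mod_cast NeZero.pos N
  have hN0 : (0 : ℝ) < N := by linarith
  have hp : 0 < (N : ℝ) ^ (-(ε / 2)) := Real.rpow_pos_of_pos hN0 _
  have hpp : (N : ℝ) ^ (ε / 2) * (N : ℝ) ^ (-(ε / 2)) = 1 := by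
    rw [← Real.rpow_add hN0, add_neg_cancel, Real.rpow_zero]
  rw [add_mul]
  rcases le_or_gt ((N : ℝ) ^ (-(ε / 2))) κ with hle | hgt
  · have h1 : C * (N : ℝ) ^ (-(ε / 2)) ≤ 1 / 4 := by
      refine (mul_le_mul_of_nonneg_left (hle.trans (min_le_left _ _)) hC.le).trans_eq ?_
      field_simp
    have h2 : 4 ≤ (N : ℝ) ^ ε := by
      have h3 : (N : ℝ) ^ ε = ((N : ℝ) ^ (ε / 2)) ^ 2 := by
        rw [← Real.rpow_natCast, ← Real.rpow_mul hN0.le]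
        congr 1
        push_cast
        ring
      have h4 : (N : ℝ) ^ (-(ε / 2)) ≤ 1 / 2 := hle.trans (min_le_right _ _)
      have h5 : 2 ≤ (N : ℝ) ^ (ε / 2) := by
        have : 0 < (N : ℝ) ^ (ε / 2) := Real.rpow_pos_of_pos hN0 _
        nlinarith
      rw [h3]
      nlinarith
    have h3 := abs_inv_sub_one_le (by positivity) h1 (h N h2 rN hr1 hrN V hV hVr)
    rw [inv_div] at h3
    have : 0 ≤ M / κ * (N : ℝ) ^ (-(ε / 2)) := by positivity
    linarith
  · have h1 : (N : ℝ) ^ d * (N : ℝ) ^ d ≤ (κ⁻¹) ^ (4 * d / ε) := by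
      have h2 : (N : ℝ) ^ (ε / 2) ≤ κ⁻¹ := by
        rw [Real.rpow_neg hN0.le] at hgt
        exact ((lt_inv_comm₀ hκ0 (by positivity)).1 hgt).le
      have h3 : (N : ℝ) ^ d * (N : ℝ) ^ d = ((N : ℝ) ^ (ε / 2)) ^ (4 * d / ε) := by
        rw [← Real.rpow_mul hN0.le, ← Real.rpow_natCast, ← Real.rpow_add hN0]
        congr 1
        field_simp
        ring
      rw [h3]
      gcongr
    have hWc := hcap (V.image torusToLat) (hV.image _)
    have h4 : |(N : ℝ) ^ d / (unifMeanExit (V : Set (Torus d N))ᶜ * latCap (V.image torusToLat)) -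
        1| ≤ M := by
      rcases unifMeanExit_eq_zero_or_ge hd0 V hV with h0 | h0
      · rw [h0, zero_mul, div_zero, zero_sub, abs_neg, abs_one, hM]
        have : 0 ≤ κ⁻¹ ^ (4 * d / ε) / c0 := by positivity
        linarith
      · have h5 : ((N : ℝ) ^ d)⁻¹ * c0 ≤
            unifMeanExit (V : Set (Torus d N))ᶜ * latCap (V.image torusToLat) :=
          mul_le_mul h0 hWc hc0.le (unifMeanExit_nonneg _)
        have h6 : (N : ℝ) ^ d / (unifMeanExit (V : Set (Torus d N))ᶜ * latCap (V.image torusToLat)) ≤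
            κ⁻¹ ^ (4 * d / ε) / c0 := by
          refine (div_le_div_of_nonneg_left (by positivity) (by positivity) h5).trans ?_
          rw [div_mul_eq_div_div, div_inv_eq_mul]
          gcongr
        have h7 : 0 ≤ (N : ℝ) ^ d /
            (unifMeanExit (V : Set (Torus d N))ᶜ * latCap (V.image torusToLat)) :=
          div_nonneg (by positivity) (mul_nonneg (unifMeanExit_nonneg _) (latCap_nonneg _))
        rw [abs_le]
        constructor <;> linarith
    have h8 : M ≤ M / κ * (N : ℝ) ^ (-(ε / 2)) := by
      rw [div_mul_eq_mul_div, le_div_iff₀ hκ0]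
      exact mul_le_mul_of_nonneg_left hgt.le hM0.le
    have : 0 ≤ 3 * C * (N : ℝ) ^ (-(ε / 2)) := by positivity
    linarith

end Parameters

section PathSpace

variable {α : Type*} [MeasurableSpace α] [Countable α] [MeasurableSingletonClass α]

theorem measurableSet_coord (n : ℕ) (C : Set α) :
    MeasurableSet {ω : ℕ → α | ω n ∈ C} := by
  have h : Measurable fun ω : ℕ → α => ω n := measurable_pi_apply n
  exact h (Set.to_countable C).measurableSet

theorem measurableSet_path (C : ℕ → Set α) :
    MeasurableSet {ω : ℕ → α | ∀ k, ω k ∈ C k} := by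
  rw [Set.ofPred_forall]
  exact MeasurableSet.iInter fun k => measurableSet_coord k (C k)

theorem measure_eq_tsum_coord (μ : Measure (ℕ → α)) (n : ℕ)
    {A : Set (ℕ → α)} (hA : MeasurableSet A) :
    μ A = ∑' y, μ (A ∩ {ω | ω n = y}) := by
  rw [← measure_iUnion]
  · congr 1
    ext ω
    simp
  · intro y z hyz
    refine Set.disjoint_left.2 fun ω h1 h2 => hyz ?_
    exact h1.2.symm.trans h2.2
  · exact fun y => hA.inter (measurableSet_coord n {y})

end PathSpace

section WalkLaw

variable {d : ℕ} {R : Type*} [CommRing R]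

theorem adj_iff (h1 : (1 : R) ≠ 0) (x y : Fin d → R) :
    adj x y ↔ ∃ i : Fin d, y = x + Pi.single i 1 ∨ y = x - Pi.single i 1 := by
  constructor
  · rintro ⟨-, i, h | h, hj⟩
    · refine ⟨i, Or.inl (funext fun j => ?_)⟩
      by_cases hji : j = i
      · subst hji; simp [h]
      · simp [hji, hj j hji]
    · refine ⟨i, Or.inr (funext fun j => ?_)⟩
      by_cases hji : j = i
      · subst hji; simp [h]
      · simp [hji, hj j hji]
  · rintro ⟨i, rfl | rfl⟩
    · refine ⟨fun h => h1 ?_, i, Or.inl (by simp), fun j hj => by simp [hj]⟩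
      simpa using congrFun h i
    · refine ⟨fun h => h1 ?_, i, Or.inr (by simp), fun j hj => by simp [hj]⟩
      have h2 : x i = x i - 1 := by simpa using congrFun h i
      linear_combination h2

theorem tsum_srwStep_mul (hd : d ≠ 0) (h1 : (1 : R) ≠ 0) (h2 : (2 : R) ≠ 0)
    {f : (Fin d → R) → ℝ} (hf : ∀ x, 0 ≤ f x) (x : Fin d → R) :
    ∑' y, srwStep x y * ENNReal.ofReal (f y) = ENNReal.ofReal (srwAvg d R f x) := by
  set σ : Bool → R := fun b => if b then 1 else -1 with hσ
  set g : Fin d × Bool → (Fin d → R) := fun p => x + Pi.single p.1 (σ p.2) with hg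
  have hσ0 : ∀ b, σ b ≠ 0 := fun b => by cases b <;> simp [σ, h1]
  have h11 : (1 : R) ≠ -1 := fun h => h2 (by rw [← one_add_one_eq_two]; nth_rewrite 1 [h]; simp)
  have hinj : Function.Injective g := by
    rintro ⟨i, b⟩ ⟨j, c⟩ h
    have h3 : (Pi.single i (σ b) : Fin d → R) = Pi.single j (σ c) := add_left_cancel h
    have h4 := congrFun h3 i
    by_cases hij : i = j
    · subst hij
      have hbc : σ b = σ c := by simpa using h4
      cases b <;> cases c <;> simp_all [σ]
    · simp [hij, hσ0] at h4
  have hadj : ∀ p, adj x (g p) := fun p => by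
    rw [adj_iff h1]
    refine ⟨p.1, ?_⟩
    rcases p with ⟨i, _ | _⟩
    · right; simp [g, σ, sub_eq_add_neg, Pi.single_neg]
    · left; simp [g, σ]
  have hsupp : (Function.support fun y => srwStep x y * ENNReal.ofReal (f y)) ⊆ Set.range g := by
    intro y hy
    have hxy : adj x y := by
      by_contra h
      simp [srwStep, h] at hy
    obtain ⟨i, rfl | rfl⟩ := (adj_iff h1 x y).1 hxy
    · exact ⟨(i, true), by simp [g, σ]⟩
    · exact ⟨(i, false), by simp [g, σ, sub_eq_add_neg, Pi.single_neg]⟩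
  rw [← hinj.tsum_eq hsupp, tsum_fintype, Fintype.sum_prod_type]
  have h0 : ((2 * d : ℕ) : ℝ≥0∞)⁻¹ = ENNReal.ofReal (2 * d : ℝ)⁻¹ := by
    rw [ENNReal.ofReal_inv_of_pos (by positivity)]
    congr 1
    rw [← ENNReal.ofReal_natCast]
    push_cast
    rfl
  have hrw : ∀ i b, srwStep x (g (i, b)) * ENNReal.ofReal (f (g (i, b))) =
      ENNReal.ofReal ((2 * d : ℝ)⁻¹ * f (g (i, b))) := fun i b => by
    rw [srwStep, if_pos (hadj _), h0, ENNReal.ofReal_mul (by positivity)]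
  simp only [hrw, Fintype.sum_bool]
  rw [srwAvg_apply, Finset.mul_sum, ENNReal.ofReal_sum_of_nonneg
    (fun i _ => mul_nonneg (by positivity) (add_nonneg (hf _) (hf _)))]
  refine Finset.sum_congr rfl fun i _ => ?_
  have hp : g (i, true) = x + Pi.single i 1 := by simp [g, σ]
  have hm : g (i, false) = x - Pi.single i 1 := by simp [g, σ, sub_eq_add_neg, Pi.single_neg]
  rw [hp, hm, mul_add, ENNReal.ofReal_add (mul_nonneg (by positivity) (hf _))
    (mul_nonneg (by positivity) (hf _))]

variable [MeasurableSpace R]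

theorem IsWalkLaw.measure_cylinder_update {μ : Measure (ℕ → (Fin d → R))}
    {init : (Fin d → R) → ℝ≥0∞} (hμ : IsWalkLaw μ init) (n : ℕ) (w : ℕ → (Fin d → R))
    (y : Fin d → R) :
    μ {ω | ∀ k, k ≤ n + 1 → ω k = Function.update w (n + 1) y k} =
      μ {ω | ∀ k, k ≤ n → ω k = w k} * srwStep (w n) y := by
  have hu : ∀ k ≤ n, Function.update w (n + 1) y k = w k := fun k hk =>
    Function.update_of_ne (by omega) _ _
  rw [hμ.2, hμ.2, Finset.prod_range_succ, hu 0 (Nat.zero_le n), hu n le_rfl,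
    Function.update_self, ← mul_assoc]
  congr 2
  refine Finset.prod_congr rfl fun k hk => ?_
  have hk' := Finset.mem_range.1 hk
  rw [hu k hk'.le, hu (k + 1) hk']

variable [Countable R] [MeasurableSingletonClass R]

theorem IsWalkLaw.measure_cylinder_inter_stay (hd : d ≠ 0) (h1 : (1 : R) ≠ 0) (h2 : (2 : R) ≠ 0)
    {μ : Measure (ℕ → (Fin d → R))}
    {init : (Fin d → R) → ℝ≥0∞} (hμ : IsWalkLaw μ init) (B : Set (Fin d → R)) (m n : ℕ)
    (w : ℕ → (Fin d → R)) :
    μ {ω | (∀ k, k ≤ n → ω k = w k) ∧ ∀ k, n < k → k ≤ n + m → ω k ∈ B} =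
      μ {ω | ∀ k, k ≤ n → ω k = w k} * ENNReal.ofReal (stayProb B m (w n)) := by
  induction m generalizing n w with
  | zero =>
    rw [stayProb, ENNReal.ofReal_one, mul_one]
    congr 1
    ext ω
    exact ⟨fun h => h.1, fun h => ⟨h, fun k h3 h4 => by omega⟩⟩
  | succ m ih =>
    have hmeas : MeasurableSet {ω : ℕ → (Fin d → R) |
        (∀ k, k ≤ n → ω k = w k) ∧ ∀ k, n < k → k ≤ n + (m + 1) → ω k ∈ B} := by
      convert measurableSet_path (fun k => {z : Fin d → R |
        (k ≤ n → z = w k) ∧ (n < k → k ≤ n + (m + 1) → z ∈ B)}) using 1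
      ext ω
      exact forall_and.symm
    rw [measure_eq_tsum_coord μ (n + 1) hmeas, stayProb, ← tsum_srwStep_mul hd h1 h2
      (fun y => Set.indicator_nonneg (fun z _ => stayProb_nonneg B m z) y), ← ENNReal.tsum_mul_left]
    refine tsum_congr fun y => ?_
    by_cases hy : y ∈ B
    · rw [Set.indicator_of_mem hy, ← mul_assoc, ← hμ.measure_cylinder_update n w y]
      have := ih (n + 1) (Function.update w (n + 1) y)
      rw [Function.update_self] at this
      rw [← this]
      congr 1
      ext ω
      simp only [Set.mem_inter_iff, Set.mem_ofPred_eq]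
      constructor
      · rintro ⟨⟨h3, h4⟩, h5⟩
        refine ⟨fun k hk => ?_, fun k hk hk' => h4 k (by omega) (by omega)⟩
        rcases Nat.lt_or_ge n k with hn | hn
        · obtain rfl : k = n + 1 := by omega
          rw [Function.update_self, h5]
        · rw [Function.update_of_ne (by omega), h3 k hn]
      · rintro ⟨h3, h4⟩
        have h5 : ω (n + 1) = y := by
          have := h3 (n + 1) le_rfl
          rwa [Function.update_self] at this
        refine ⟨⟨fun k hk => ?_, fun k hk hk' => ?_⟩, h5⟩
        · have := h3 k (by omega)
          rwa [Function.update_of_ne (by omega)] at this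
        · rcases Nat.lt_or_ge (n + 1) k with hn | hn
          · exact h4 k hn (by omega)
          · obtain rfl : k = n + 1 := by omega
            rwa [h5]
    · rw [Set.indicator_of_notMem hy, ENNReal.ofReal_zero, mul_zero, mul_zero]
      convert measure_empty (μ := μ)
      ext ω
      simp only [Set.mem_inter_iff, Set.mem_ofPred_eq, Set.mem_empty_iff_false, iff_false]
      rintro ⟨⟨-, h4⟩, h5⟩
      exact hy (h5 ▸ h4 (n + 1) (by omega) (by omega))

theorem IsWalkLaw.measure_stay (hd : d ≠ 0) (h1 : (1 : R) ≠ 0) (h2 : (2 : R) ≠ 0)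
    {μ : Measure (ℕ → (Fin d → R))}
    {init : (Fin d → R) → ℝ≥0∞} (hμ : IsWalkLaw μ init) (A B : Set (Fin d → R)) (m : ℕ) :
    μ {ω | ω 0 ∈ A ∧ ∀ k, 0 < k → k ≤ m → ω k ∈ B} =
      ∑' x, init x * ENNReal.ofReal (A.indicator (stayProb B m) x) := by
  have hmeas : MeasurableSet {ω : ℕ → (Fin d → R) |
      ω 0 ∈ A ∧ ∀ k, 0 < k → k ≤ m → ω k ∈ B} := by
    convert measurableSet_path (fun k => {z : Fin d → R |
      (k = 0 → z ∈ A) ∧ (0 < k → k ≤ m → z ∈ B)}) using 1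
    ext ω
    refine Iff.trans ?_ forall_and.symm
    simp
  rw [measure_eq_tsum_coord μ 0 hmeas]
  refine tsum_congr fun x => ?_
  by_cases hx : x ∈ A
  · rw [Set.indicator_of_mem hx]
    have h3 := hμ.measure_cylinder_inter_stay hd h1 h2 B m 0 (fun _ => x)
    rw [hμ.2, Finset.prod_range_zero, mul_one] at h3
    rw [← h3]
    congr 1
    ext ω
    simp only [Set.mem_inter_iff, Set.mem_ofPred_eq, Nat.le_zero, forall_eq, zero_add]
    constructor
    · rintro ⟨⟨-, h4⟩, h5⟩
      exact ⟨h5, h4⟩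
    · rintro ⟨h5, h4⟩
      exact ⟨⟨h5 ▸ hx, h4⟩, h5⟩
  · rw [Set.indicator_of_notMem hx, ENNReal.ofReal_zero, mul_zero]
    convert measure_empty (μ := μ)
    ext ω
    simp only [Set.mem_inter_iff, Set.mem_ofPred_eq, Set.mem_empty_iff_false, iff_false]
    rintro ⟨⟨h4, -⟩, h5⟩
    exact hx (h5 ▸ h4)

theorem IsWalkLaw.measure_avoid (hd : d ≠ 0) (h1 : (1 : R) ≠ 0) (h2 : (2 : R) ≠ 0)
    {μ : Measure (ℕ → (Fin d → R))}
    {init : (Fin d → R) → ℝ≥0∞} (hμ : IsWalkLaw μ init) (B : Set (Fin d → R)) (m : ℕ) :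
    μ {ω | ∀ k, k ≤ m → ω k ∈ B} = ∑' x, init x * ENNReal.ofReal (avoidProb B m x) := by
  rw [avoidProb, ← hμ.measure_stay hd h1 h2]
  congr 1
  ext ω
  refine ⟨fun h => ⟨h 0 (Nat.zero_le m), fun k _ hk => h k hk⟩, fun h k hk => ?_⟩
  rcases Nat.eq_zero_or_pos k with rfl | h0
  · exact h.1
  · exact h.2 k h0 hk

end WalkLaw

theorem IsWalkLaw.measure_escEvent {d : ℕ} (hd : d ≠ 0) {x : Lat d} {μ : Measure (ℕ → Lat d)}
    (hμ : IsWalkLaw μ (pointInit x)) (W : Set (Lat d)) :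
    μ (escEvent W) = ENNReal.ofReal (escProb Wᶜ x) := by
  have := hμ.1
  have h1 : ∀ m, μ {ω | ∀ k, 0 < k → k ≤ m → ω k ∈ Wᶜ} = ENNReal.ofReal (stayProb Wᶜ m x) := by
    intro m
    have h := hμ.measure_stay hd one_ne_zero two_ne_zero Set.univ Wᶜ m
    simp only [Set.mem_univ, true_and, Set.indicator_univ] at h
    rw [h, tsum_eq_single x fun y hy => by simp [pointInit, hy]]
    simp [pointInit]
  have h2 : escEvent W = ⋂ m, {ω | ∀ k, 0 < k → k ≤ m → ω k ∈ Wᶜ} := by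
    ext ω
    simp only [escEvent, Set.mem_ofPred_eq, Set.mem_iInter]
    exact ⟨fun h m k hk _ => h k hk, fun h k hk => h k k hk le_rfl⟩
  have h3 : Tendsto (fun m => μ {ω | ∀ k, 0 < k → k ≤ m → ω k ∈ Wᶜ}) atTop
      (nhds (μ (escEvent W))) := by
    rw [h2]
    refine tendsto_measure_iInter_atTop (fun m => ?_) ?_ ⟨0, measure_ne_top _ _⟩
    · refine MeasurableSet.nullMeasurableSet ?_
      exact measurableSet_path (fun k => {z : Lat d | 0 < k → k ≤ m → z ∈ Wᶜ})
    · exact fun a b hab ω h k hk hk' => h k hk (hk'.trans hab)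
  refine tendsto_nhds_unique h3 ?_
  simp only [h1]
  exact (ENNReal.continuous_ofReal.tendsto _).comp (tendsto_stayProb Wᶜ hd x)

theorem IsCap.eq_latCap {d : ℕ} (hd : d ≠ 0) {W : Finset (Lat d)} {r : ℝ}
    (h : IsCap d (W : Set (Lat d)) r) : r = latCap W := by
  obtain ⟨μ, hμ, rfl⟩ := h
  simp only [Finset.mem_coe]
  rw [finsum_mem_finset_eq_sum, latCap]
  refine Finset.sum_congr rfl fun x _ => ?_
  rw [(hμ x).measure_escEvent hd, ENNReal.toReal_ofReal (escProb_nonneg _ x)]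

section Gaps

theorem IsIIDExp.measurableSet (n : ℕ) (s : ℕ → ℝ) :
    MeasurableSet {g : ℕ → ℝ | ∀ k, k ≤ n → s k < g k} := by
  have h : ∀ k, MeasurableSet {g : ℕ → ℝ | k ≤ n → s k < g k} := fun k => by
    by_cases hk : k ≤ n
    · simp only [hk, true_imp_iff]
      exact measurableSet_lt measurable_const (measurable_pi_apply k)
    · simp [hk]
  rw [Set.ofPred_forall]
  exact MeasurableSet.iInter h

variable {ν : Measure (ℕ → ℝ)}

theorem IsIIDExp.ae_pos (hν : IsIIDExp ν) : ∀ᵐ g ∂ν, ∀ k, 0 < g k := by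
  have := hν.1
  rw [ae_all_iff]
  intro n
  have h := hν.2 n 0 fun _ => le_rfl
  simp only [Pi.zero_apply, Finset.sum_const_zero, neg_zero, Real.exp_zero,
    ENNReal.ofReal_one] at h
  have h2 := (mem_ae_iff_prob_eq_one (IsIIDExp.measurableSet n 0)).2 h
  filter_upwards [h2] with g hg using hg n le_rfl

theorem IsIIDExp.measure_finset (hν : IsIIDExp ν) (I : Finset ℕ) {s : ℝ} (hs : 0 ≤ s) :
    ν {g | ∀ k ∈ I, s < g k} = ENNReal.ofReal (Real.exp (-s)) ^ I.card := by
  obtain ⟨n, hn⟩ : ∃ n, I ⊆ Finset.range (n + 1) :=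
    ⟨I.sup id, fun k hk => Finset.mem_range.2 (Nat.lt_succ_of_le (Finset.le_sup (f := id) hk))⟩
  have h := hν.2 n (fun k => if k ∈ I then s else 0) fun k => by
    split_ifs
    · exact hs
    · exact le_rfl
  rw [Finset.sum_ite_mem, Finset.inter_eq_right.2 hn, Finset.sum_const, nsmul_eq_mul,
    ← mul_neg, Real.exp_nat_mul, ENNReal.ofReal_pow (Real.exp_pos _).le] at h
  rw [← h]
  refine measure_congr ?_
  filter_upwards [hν.ae_pos] with g hg
  refine propext ⟨fun h k _ => ?_, fun h k hk => ?_⟩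
  · split_ifs with hk
    · exact h k hk
    · exact hg k
  · have := h k (Nat.lt_succ_iff.1 (Finset.mem_range.1 (hn hk)))
    rwa [if_pos hk] at this

theorem IsIIDExp.measure_lt (hν : IsIIDExp ν) (k : ℕ) {s : ℝ} (hs : 0 ≤ s) :
    ν {g | s < g k} = ENNReal.ofReal (Real.exp (-s)) := by
  simpa using hν.measure_finset {k} hs

theorem IsIIDExp.lintegral_gap (hν : IsIIDExp ν) (k : ℕ) :
    ∫⁻ g, ENNReal.ofReal (g k) ∂ν = 1 := by
  rw [lintegral_eq_lintegral_meas_lt ν (hν.ae_pos.mono fun g hg => (hg k).le)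
    (measurable_pi_apply k).aemeasurable,
    setLIntegral_congr_fun measurableSet_Ioi fun s hs => hν.measure_lt k (le_of_lt hs),
    ← ofReal_integral_eq_lintegral_ofReal (integrableOn_exp_neg_Ioi 0)
      (Eventually.of_forall fun s => (Real.exp_pos _).le),
    integral_exp_neg_Ioi_zero, ENNReal.ofReal_one]

theorem IsIIDExp.ae_tendsto_sum (hν : IsIIDExp ν) :
    ∀ᵐ g ∂ν, Tendsto (fun n => ∑ k ∈ Finset.range n, g k) atTop atTop := by
  have := hν.1
  set A : ℕ → Set (ℕ → ℝ) := fun k => {g | 1 < g k} with hA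
  have hmeas : ∀ k, MeasurableSet (A k) := fun k =>
    measurableSet_lt measurable_const (measurable_pi_apply k)
  have hmA : ∀ k, ν (A k) = ENNReal.ofReal (Real.exp (-1)) := fun k =>
    hν.measure_lt k zero_le_one
  have hind : ProbabilityTheory.iIndepSet A ν := by
    rw [ProbabilityTheory.iIndepSet_iff_meas_biInter hmeas]
    intro I
    rw [Finset.prod_congr rfl fun k _ => hmA k, Finset.prod_const,
      ← hν.measure_finset I zero_le_one]
    congr 1
    ext g
    simp [A]
  have h1 : ν (limsup A atTop) = 1 := by
    refine ProbabilityTheory.measure_limsup_eq_one hmeas hind ?_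
    simp only [hmA]
    refine ENNReal.tsum_const_eq_top_of_ne_zero ?_
    simp [Real.exp_pos]
  have h2 := (mem_ae_iff_prob_eq_one (MeasurableSet.measurableSet_limsup hmeas)).2 h1
  filter_upwards [h2, hν.ae_pos] with g hg hpos
  rw [← not_summable_iff_tendsto_nat_atTop_of_nonneg fun k => (hpos k).le]
  intro hsum
  have h3 : ∀ᶠ k in atTop, g k < 1 := hsum.tendsto_atTop_zero.eventually (gt_mem_nhds one_pos)
  rw [mem_limsup_iff_frequently_mem] at hg
  obtain ⟨k, hk1, hk2⟩ := (hg.and_eventually h3).exists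
  exact lt_asymm hk1 hk2

end Gaps

section HittingTime

variable {d N : ℕ}

/-- The entrance time is the sum of the gaps before the first visit of the skeleton. -/
theorem hitT_eq_sum (V : Set (Torus d N)) (X : ℕ → Torus d N) (g : ℕ → ℝ)
    (hg : ∀ k, 0 < g k) (hg' : Tendsto (fun n => ∑ k ∈ Finset.range n, g k) atTop atTop)
    {τ : ℕ} (hτ : X τ ∈ V) (hτ' : ∀ j < τ, X j ∉ V) :
    hitT V (X, g) = ∑ k ∈ Finset.range τ, g k := by
  set S : ℕ → ℝ := fun n => ∑ k ∈ Finset.range n, g k with hS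
  have hmono : StrictMono S := strictMono_nat_of_lt_succ fun n => by
    simp only [hS, Finset.sum_range_succ]
    linarith [hg n]
  have hS0 : S 0 = 0 := by simp [hS]
  have hnJ : nJumps g (S τ) = τ := by
    have : {n | S n ≤ S τ} = Set.Iic τ := by
      ext n
      exact hmono.le_iff_le
    rw [nJumps, this, csSup_Iic]
  refine IsLeast.csInf_eq ⟨⟨?_, ?_⟩, ?_⟩
  · exact Finset.sum_nonneg fun k _ => (hg k).le
  · change X (nJumps g (S τ)) ∈ V
    rwa [hnJ]
  · rintro t ⟨ht0, ht⟩
    have hmem : nJumps g t ∈ {n | S n ≤ t} := by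
      refine Nat.sSup_mem ⟨0, by simpa [hS0] using ht0⟩ ?_
      obtain ⟨m, hm⟩ := (hg'.eventually_gt_atTop t).exists
      refine ⟨m, fun n hn => ?_⟩
      exact (hmono.lt_iff_lt.1 (lt_of_le_of_lt hn hm)).le
    have hle : τ ≤ nJumps g t := by
      by_contra! hlt
      exact hτ' _ hlt ht
    exact (hmono.monotone hle).trans hmem

instance : MeasurableSingletonClass (ZMod N) := ⟨fun _ => trivial⟩

theorem zmod_one_ne_zero (hN : 3 ≤ N) : (1 : ZMod N) ≠ 0 := by
  have : Fact (1 < N) := ⟨by omega⟩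
  exact one_ne_zero

theorem zmod_two_ne_zero (hN : 3 ≤ N) : (2 : ZMod N) ≠ 0 := by
  intro h
  have h2 : ((2 : ℕ) : ZMod N) = 0 := by exact_mod_cast h
  rw [ZMod.natCast_eq_zero_iff] at h2
  have := Nat.le_of_dvd two_pos h2
  omega

theorem not_isWalkLaw_unifInit_two (hd : d ≠ 0) (μ : Measure (ℕ → Torus d 2)) :
    ¬ IsWalkLaw μ (unifInit d 2) := by
  intro hμ
  set w : ℕ → Torus d 2 := 0
  have h0 := hμ.2 0 w
  have hmeas : MeasurableSet {ω : ℕ → Torus d 2 | ∀ k, k ≤ 0 → ω k = w k} :=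
    measurableSet_path (fun k => {z : Torus d 2 | k ≤ 0 → z = w k})
  rw [Finset.prod_range_zero, mul_one, measure_eq_tsum_coord μ 1 hmeas] at h0
  have h1 : ∀ y, μ ({ω | ∀ k, k ≤ 0 → ω k = w k} ∩ {ω | ω 1 = y}) =
      unifInit d 2 0 * srwStep (0 : Torus d 2) y := fun y => by
    have h2 := hμ.measure_cylinder_update 0 w y
    rw [hμ.2 0 w, Finset.prod_range_zero, mul_one] at h2
    refine Eq.trans ?_ h2
    congr 1
    ext ω
    simp only [Set.mem_inter_iff, Set.mem_ofPred_eq, zero_add]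
    constructor
    · rintro ⟨h3, h4⟩ k hk
      rcases Nat.le_one_iff_eq_zero_or_eq_one.1 hk with rfl | rfl
      · simpa using h3 0 le_rfl
      · simpa using h4
    · intro h
      exact ⟨fun k hk => by obtain rfl := Nat.le_zero.1 hk; simpa using h 0 (by omega),
        by simpa using h 1 le_rfl⟩
  have h2 : ∑' y, srwStep (0 : Torus d 2) y ≤ 1 / 2 := by
    rw [tsum_fintype]
    have h3 : ∀ y : Torus d 2, srwStep (0 : Torus d 2) y ≤
        ∑ i : Fin d, if y = Pi.single i 1 then ((2 * d : ℕ) : ℝ≥0∞)⁻¹ else 0 := fun y => by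
      rw [srwStep]
      split_ifs with h
      · obtain ⟨i, hi⟩ := (adj_iff one_ne_zero (0 : Torus d 2) y).1 h
        have hy : y = Pi.single i 1 := by
          rcases hi with rfl | rfl
          · simp
          · rw [zero_sub, ← Pi.single_neg]; rfl
        refine le_trans ?_ (Finset.single_le_sum (fun _ _ => bot_le) (Finset.mem_univ i))
        rw [if_pos hy]
      · exact bot_le
    refine (Finset.sum_le_sum fun y _ => h3 y).trans_eq ?_
    rw [Finset.sum_comm]
    simp only [Finset.sum_ite_eq', Finset.mem_univ, if_true, Finset.sum_const, Finset.card_univ,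
      Fintype.card_fin, nsmul_eq_mul]
    push_cast
    rw [ENNReal.mul_inv (by simp) (by simp), mul_comm, mul_assoc,
      ENNReal.inv_mul_cancel (by simpa using hd) (by simp)]
    simp
  have h3 : unifInit d 2 0 * ∑' y, srwStep (0 : Torus d 2) y = unifInit d 2 0 := by
    rw [← ENNReal.tsum_mul_left, ← tsum_congr h1]
    exact h0
  have hne : unifInit d 2 0 ≠ 0 := by simp [unifInit]
  have hnt : unifInit d 2 0 ≠ ∞ := by simp [unifInit]
  have h4 : ∑' y, srwStep (0 : Torus d 2) y = 1 := by
    refine (ENNReal.mul_right_inj hne hnt).1 ?_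
    rw [h3, mul_one]
  rw [h4] at h2
  norm_num at h2

variable [NeZero N]

theorem measure_avoid_torus (hd : d ≠ 0) (hN : 3 ≤ N) {μ : Measure (ℕ → Torus d N)}
    (hμ : IsWalkLaw μ (unifInit d N)) (B : Set (Torus d N)) (m : ℕ) :
    μ {ω | ∀ k, k ≤ m → ω k ∈ B} =
      ∑ x, ENNReal.ofReal (((N : ℝ) ^ d)⁻¹ * avoidProb B m x) := by
  have hN0 : (0 : ℝ) < N := by exact_mod_cast NeZero.pos N
  have h := hμ.measure_avoid hd (zmod_one_ne_zero hN) (zmod_two_ne_zero hN) B m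
  rw [h, tsum_fintype]
  refine Finset.sum_congr rfl fun x _ => ?_
  rw [ENNReal.ofReal_mul (by positivity), ENNReal.ofReal_inv_of_pos (by positivity), unifInit,
    ENNReal.ofReal_pow hN0.le, ENNReal.ofReal_natCast]

theorem tsum_measure_avoid_torus (hd : d ≠ 0) (hN : 3 ≤ N) {μ : Measure (ℕ → Torus d N)}
    (hμ : IsWalkLaw μ (unifInit d N)) {B : Set (Torus d N)} (hB : Bᶜ.Nonempty) :
    ∑' m, μ {ω | ∀ k, k ≤ m → ω k ∈ B} = ENNReal.ofReal (unifMeanExit B) := by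
  have hs := summable_avoidProb_torus hd hB
  simp only [measure_avoid_torus hd hN hμ]
  rw [Summable.tsum_finsetSum fun _ _ => ENNReal.summable, unifMeanExit, Finset.mul_sum,
    ENNReal.ofReal_sum_of_nonneg fun x _ => mul_nonneg (by positivity) (meanExit_nonneg B x)]
  refine Finset.sum_congr rfl fun x _ => ?_
  rw [meanExit, ← tsum_mul_left, ENNReal.ofReal_tsum_of_nonneg
    (fun m => mul_nonneg (by positivity) (avoidProb_nonneg B m x)) ((hs x).mul_left _)]

theorem ae_exists_mem_torus (hd : d ≠ 0) (hN : 3 ≤ N) {μ : Measure (ℕ → Torus d N)}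
    (hμ : IsWalkLaw μ (unifInit d N)) {V : Set (Torus d N)} (hV : V.Nonempty) :
    ∀ᵐ ω ∂μ, ∃ k, ω k ∈ V := by
  have hne : ∑' m, μ {ω | ∀ k, k ≤ m → ω k ∈ Vᶜ} ≠ ∞ := by
    rw [tsum_measure_avoid_torus hd hN hμ (by simpa using hV)]
    exact ENNReal.ofReal_ne_top
  have h0 := ENNReal.tendsto_atTop_zero_of_tsum_ne_top hne
  rw [ae_iff]
  refine le_antisymm (ge_of_tendsto' h0 fun m => measure_mono fun ω hω k _ hk => hω ⟨k, hk⟩)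
    bot_le

theorem integral_hitT (hd : d ≠ 0) (hN : 3 ≤ N) {V : Set (Torus d N)} (hV : V.Nonempty)
    {P : Measure (CTPath d N)} (hP : IsCTWalk P (unifInit d N)) :
    ∫ ω, hitT V ω ∂P = unifMeanExit Vᶜ := by
  obtain ⟨μ, ν, hμ, hν, rfl⟩ := hP
  have := hμ.1
  have := hν.1
  set A : ℕ → Set (ℕ → Torus d N) := fun m => {ω | ∀ k, k ≤ m → ω k ∈ Vᶜ} with hA
  have hAm : ∀ m, MeasurableSet (A m) := fun m =>
    measurableSet_path (fun k => {z : Torus d N | k ≤ m → z ∈ Vᶜ})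
  have hgm : ∀ k, Measurable fun g : ℕ → ℝ => ENNReal.ofReal (g k) := fun k =>
    ENNReal.measurable_ofReal.comp (measurable_pi_apply k)
  have him : ∀ m, Measurable ((A m).indicator (1 : (ℕ → Torus d N) → ℝ≥0∞)) := fun m =>
    measurable_one.indicator (hAm m)
  set F : CTPath d N → ℝ≥0∞ := fun ω =>
    ∑' m, (A m).indicator (1 : (ℕ → Torus d N) → ℝ≥0∞) ω.1 * ENNReal.ofReal (ω.2 m) with hF
  have hterm : ∀ m, Measurable fun ω : CTPath d N =>
      (A m).indicator (1 : (ℕ → Torus d N) → ℝ≥0∞) ω.1 * ENNReal.ofReal (ω.2 m) := fun m =>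
    ((him m).comp measurable_fst).mul ((hgm m).comp measurable_snd)
  have hFm : Measurable F := Measurable.tsum hterm
  have hFint : ∫⁻ ω, F ω ∂(μ.prod ν) = ENNReal.ofReal (unifMeanExit Vᶜ) := by
    rw [hF, lintegral_tsum fun m => (hterm m).aemeasurable,
      ← tsum_measure_avoid_torus hd hN hμ (by simpa using hV)]
    refine tsum_congr fun m => ?_
    rw [lintegral_prod_mul (him m).aemeasurable (hgm m).aemeasurable, hν.lintegral_gap, mul_one,
      lintegral_indicator_one (hAm m)]
  have hae : ∀ᵐ ω ∂(μ.prod ν), F ω = ENNReal.ofReal (hitT V ω) ∧ 0 ≤ hitT V ω := by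
    filter_upwards [Measure.quasiMeasurePreserving_fst.ae (ae_exists_mem_torus hd hN hμ hV),
      Measure.quasiMeasurePreserving_snd.ae hν.ae_pos,
      Measure.quasiMeasurePreserving_snd.ae hν.ae_tendsto_sum] with ω h1 h2 h3
    have hτ := Nat.find_spec h1
    have hτ' : ∀ j < Nat.find h1, ω.1 j ∉ V := fun j hj => Nat.find_min h1 hj
    set τ := Nat.find h1
    have hhit : hitT V ω = ∑ k ∈ Finset.range τ, ω.2 k :=
      hitT_eq_sum V ω.1 ω.2 h2 h3 hτ hτ'
    refine ⟨?_, by rw [hhit]; exact Finset.sum_nonneg fun k _ => (h2 k).le⟩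
    rw [hhit, ENNReal.ofReal_sum_of_nonneg fun k _ => (h2 k).le, hF]
    dsimp only
    rw [tsum_eq_sum (s := Finset.range τ)]
    · refine Finset.sum_congr rfl fun k hk => ?_
      rw [Set.indicator_of_mem, Pi.one_apply, one_mul]
      exact fun j hj => hτ' j (lt_of_le_of_lt hj (Finset.mem_range.1 hk))
    · intro k hk
      rw [Set.indicator_of_notMem, zero_mul]
      intro h
      exact h τ (not_lt.1 (mt Finset.mem_range.2 hk)) hτ
  have h1 : ∫ ω, hitT V ω ∂(μ.prod ν) = ∫ ω, (F ω).toReal ∂(μ.prod ν) :=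
    integral_congr_ae (hae.mono fun ω hω => by
      dsimp only
      rw [hω.1, ENNReal.toReal_ofReal hω.2])
  rw [h1, integral_toReal hFm.aemeasurable
    (hae.mono fun ω hω => by rw [hω.1]; exact ENNReal.ofReal_lt_top), hFint,
    ENNReal.toReal_ofReal (unifMeanExit_nonneg _)]

end HittingTime

end Frag

namespace Frag

/-- **Proposition (expected entrance time vs. capacity).**
For every nonempty `V ⊆ A = B(0, r_N)`:
`| N^d / (E[H_V] · cap(φ(V))) − 1 | ≤ c N^{−c'}`. -/
theorem expected_hitting_vs_capacity
    (d : ℕ) (hd : 3 ≤ d) (ε : ℝ) (hε : 0 < ε ∧ ε < 1) :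
    ∃ c c' : ℝ, 0 < c ∧ 0 < c' ∧ ∀ N : ℕ, 2 ≤ N →
      ∀ rN : ℝ, 1 ≤ rN → rN ≤ (N : ℝ) ^ (1 - ε) →
        ∀ V : Set (Torus d N), V.Nonempty → V ⊆ torusBall (0 : Torus d N) rN →
          ∀ P : Measure (CTPath d N), IsCTWalk P (unifInit d N) →
            ∀ r : ℝ, IsCap d (torusToLat '' V) r →
              |(N : ℝ) ^ d / ((∫ ω, hitT V ω ∂P) * r) - 1| ≤ c * (N : ℝ) ^ (-c') := by
  have hd0 : d ≠ 0 := by omega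
  obtain ⟨c, c', hc, hc', h⟩ := exists_abs_div_unifMeanExit_mul_latCap_sub_le hd hε.1 hε.2
  refine ⟨c, c', hc, hc', fun N hN rN hr1 hrN V hV hVA P hP r hr => ?_⟩
  obtain rfl | hN3 := hN.eq_or_lt
  · obtain ⟨μ, ν, hμ, -, -⟩ := hP
    exact absurd hμ (not_isWalkLaw_unifInit_two hd0 μ)
  have : NeZero N := ⟨by omega⟩
  rw [integral_hitT hd0 hN3 hV hP]
  lift V to Finset (Torus d N) using V.toFinite
  rw [← Finset.coe_image] at hr
  rw [hr.eq_latCap hd0]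
  exact h N rN hr1 hrN V (by simpa using hV) hVA

end Frag
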